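/- arXiv:1508.00401 — 11 statements merged into one kernel-verified Lean document; each statement's English description precedes it below -/
import Mathlib

section
/- Let p ≥ 5 be prime, X_p = {α ∈ ZMod p : α ≠ 0 and α ≠ -1}, and let O(α) denote the orbit of α under the group generated by U(α) = -(1+α)⁻¹ and V(α) = α⁻¹. Then O(1) = {1, -2, -2⁻¹} has exactly three elements, and it is the unique orbit of cardinality three: if α ∈ X_p and O(α) has exactly three elements, then O(α) = {1, -2, -2⁻¹}. -/
/-!
The maps satisfy `u ^ 3 = 1` and `v ^ 2 = 1`, so a set stable under `u` and `v` is stable under the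
group they generate (`orbit_subset_of_stable`). Since `{1, -2, -2⁻¹}` is stable, with
`u : -2 ↦ 1 ↦ -2⁻¹ ↦ -2` and `v` fixing `1`, and its elements are distinct as `2, 3 ≠ 0`, it is the
orbit of `1`.

For uniqueness it suffices that an orbit of cardinality three contains `1`. If `u α = α`, then
`α² + α + 1 = 0` and `{α, v α}` is stable, so the orbit has at most two elements. Otherwise
`α, u α, u² α` are distinct and exhaust the orbit, so `v α` is one of them: `v α = α` forces `α = 1`,
`v α = u α` forces `α = -2⁻¹` and `u² α = 1`, and `v α = u² α` forces `α = -2` and `u α = 1`.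
-/

/-- A forward-stable set contains the orbits of its points: the relations `u³ = 1` and `v² = 1` make
forward stability enough. -/
lemma orbit_subset_of_stable {X : Type*} (u v : Equiv.Perm X) (hu3 : ∀ x, u (u (u x)) = x)
    (hv2 : ∀ x, v (v x) = x) (S : Set X) (hSu : ∀ x ∈ S, u x ∈ S) (hSv : ∀ x ∈ S, v x ∈ S)
    {x : X} (hx : x ∈ S) : MulAction.orbit (Subgroup.closure {u, v}) x ⊆ S := by
  have key : ∀ g ∈ Subgroup.closure {u, v}, ∀ y, g y ∈ S ↔ y ∈ S := by
    intro g hg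
    induction hg using Subgroup.closure_induction with
    | mem g hg =>
      rcases hg with rfl | rfl
      · exact fun y => ⟨fun h => hu3 y ▸ hSu _ (hSu _ h), hSu y⟩
      · exact fun y => ⟨fun h => hv2 y ▸ hSv _ h, hSv y⟩
    | one => simp
    | mul a b _ _ ha hb => exact fun y => (ha (b y)).trans (hb y)
    | inv a _ ha => exact fun y => by simpa using (ha (a⁻¹ y)).symm
  rintro _ ⟨⟨g, hg⟩, rfl⟩
  exact (key g hg x).2 hx

/-- For a prime `p ≥ 5`, under the group generated by `U(α) = -(1+α)⁻¹` and `V(α) = α⁻¹`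
acting on `X_p`, the element `1` lies in `X_p`, its orbit is `{1, -2, -2⁻¹}` and has exactly
three elements; moreover it is the unique orbit of cardinality three. -/
theorem fermat_S3_orbit_card_three (p : ℕ) [Fact p.Prime] (hp : 5 ≤ p)
    (u v : Equiv.Perm {α : ZMod p // α ≠ 0 ∧ α ≠ -1})
    (hu : ∀ α : {α : ZMod p // α ≠ 0 ∧ α ≠ -1}, (↑(u α) : ZMod p) = -(1 + (α : ZMod p))⁻¹)
    (hv : ∀ α : {α : ZMod p // α ≠ 0 ∧ α ≠ -1}, (↑(v α) : ZMod p) = ((α : ZMod p))⁻¹) :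
    ((1 : ZMod p) ≠ 0 ∧ (1 : ZMod p) ≠ -1) ∧
    (∀ β : {α : ZMod p // α ≠ 0 ∧ α ≠ -1}, (β : ZMod p) = 1 →
      Subtype.val '' MulAction.orbit (Subgroup.closure {u, v}) β =
        ({1, -2, -(2 : ZMod p)⁻¹} : Set (ZMod p)) ∧
      (MulAction.orbit (Subgroup.closure {u, v}) β).ncard = 3) ∧
    (∀ α : {α : ZMod p // α ≠ 0 ∧ α ≠ -1},
      (MulAction.orbit (Subgroup.closure {u, v}) α).ncard = 3 →
      Subtype.val '' MulAction.orbit (Subgroup.closure {u, v}) α =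
        ({1, -2, -(2 : ZMod p)⁻¹} : Set (ZMod p))) := by
  have h2 : (2 : ZMod p) ≠ 0 := by
    intro h
    have := Nat.le_of_dvd (by norm_num) ((ZMod.natCast_eq_zero_iff 2 p).1 (by exact_mod_cast h))
    omega
  have h3 : (3 : ZMod p) ≠ 0 := by
    intro h
    have := Nat.le_of_dvd (by norm_num) ((ZMod.natCast_eq_zero_iff 3 p).1 (by exact_mod_cast h))
    omega
  have h1 : (1 : ZMod p) ≠ 0 ∧ (1 : ZMod p) ≠ -1 := ⟨one_ne_zero, by grind⟩
  have hadd : ∀ x : {α : ZMod p // α ≠ 0 ∧ α ≠ -1}, 1 + (x : ZMod p) ≠ 0 := by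
    intro x h
    exact x.2.2 (by linear_combination h)
  have huu : ∀ x, (↑(u (u x)) : ZMod p) = -(1 + (x : ZMod p)) * (x : ZMod p)⁻¹ := by
    intro x
    have hx := x.2.1
    have := hadd x
    have h' := hadd (u x)
    rw [hu, hu]
    rw [hu] at h'
    grind
  have hu3 : ∀ x, u (u (u x)) = x := by
    intro x
    apply Subtype.ext
    have hx := x.2.1
    have h' := hadd (u (u x))
    rw [hu, huu]
    rw [huu] at h'
    grind
  have hv2 : ∀ x, v (v x) = x := by
    intro x
    apply Subtype.ext
    rw [hv, hv, inv_inv]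
  have hmu : ∀ x y, y ∈ MulAction.orbit (Subgroup.closure {u, v}) x →
      u y ∈ MulAction.orbit (Subgroup.closure {u, v}) x := fun x y hy =>
    MulAction.mem_orbit_of_mem_orbit
      (⟨u, Subgroup.subset_closure (by simp)⟩ : Subgroup.closure {u, v}) hy
  have hmv : ∀ x y, y ∈ MulAction.orbit (Subgroup.closure {u, v}) x →
      v y ∈ MulAction.orbit (Subgroup.closure {u, v}) x := fun x y hy =>
    MulAction.mem_orbit_of_mem_orbit
      (⟨v, Subgroup.subset_closure (by simp)⟩ : Subgroup.closure {u, v}) hy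
  have horb : ∀ β : {α : ZMod p // α ≠ 0 ∧ α ≠ -1}, (β : ZMod p) = 1 →
      Subtype.val '' MulAction.orbit (Subgroup.closure {u, v}) β =
        ({1, -2, -(2 : ZMod p)⁻¹} : Set (ZMod p)) := by
    intro β hβ
    have e1 : (↑(u β) : ZMod p) = -(2 : ZMod p)⁻¹ := by
      rw [hu, hβ]; norm_num
    have e2 : (↑(u (u β)) : ZMod p) = -2 := by
      rw [huu, hβ]; norm_num
    apply Set.Subset.antisymm
    · rw [Set.image_subset_iff]
      apply orbit_subset_of_stable u v hu3 hv2
      · intro x hx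
        have := hadd x
        simp only [Set.mem_preimage, Set.mem_insert_iff, Set.mem_singleton_iff] at hx ⊢
        rw [hu]
        rcases hx with h | h | h <;> rw [h] at this ⊢ <;> grind
      · intro x hx
        simp only [Set.mem_preimage, Set.mem_insert_iff, Set.mem_singleton_iff] at hx ⊢
        rw [hv]
        rcases hx with h | h | h <;> rw [h] <;> grind
      · simp [hβ]
    · have m := MulAction.mem_orbit_self (M := Subgroup.closure {u, v}) β
      rintro x (rfl | rfl | rfl)
      · exact ⟨β, m, hβ⟩
      · exact ⟨_, hmu _ _ (hmu _ _ m), e2⟩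
      · exact ⟨_, hmu _ _ m, e1⟩
  refine ⟨h1, fun β hβ => ⟨horb β hβ, ?_⟩, fun α hα => ?_⟩
  · rw [← Set.ncard_image_of_injective _ Subtype.val_injective, horb β hβ,
      Set.ncard_eq_three]
    exact ⟨1, -2, -2⁻¹, by grind, by grind, by grind, rfl⟩
  · have m := MulAction.mem_orbit_self (M := Subgroup.closure {u, v}) α
    suffices h : ∃ β ∈ MulAction.orbit (Subgroup.closure {u, v}) α, (β : ZMod p) = 1 by
      obtain ⟨β, hβ, hβ1⟩ := h
      rw [← MulAction.orbit_eq_iff.2 hβ]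
      exact horb β hβ1
    have ha0 := α.2.1
    have ha1 := hadd α
    by_cases hfix : u α = α
    · exfalso
      have hq : (α : ZMod p) ^ 2 + α + 1 = 0 := by
        have := hu α
        rw [hfix] at this
        grind
      have hsub : MulAction.orbit (Subgroup.closure {u, v}) α ⊆ {α, v α} := by
        apply orbit_subset_of_stable u v hu3 hv2
        · rintro x (rfl | rfl)
          · simp [hfix]
          · right
            apply Subtype.ext
            have := hadd (v α)
            rw [hu]
            rw [hv] at this ⊢
            grind
        · rintro x (rfl | rfl)
          · simp
          · simp [hv2]
        · simp
      have := Set.ncard_le_ncard hsub (Set.toFinite _)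
      have := Set.ncard_insert_le α {v α}
      rw [Set.ncard_singleton] at this
      omega
    · have hne1 : α ≠ u (u α) := fun h => hfix (by rw [h, hu3, ← h])
      have hne2 : u α ≠ u (u α) := fun h => hfix (u.injective h).symm
      have hcard : ({α, u α, u (u α)} : Set _).ncard = 3 :=
        Set.ncard_eq_three.2 ⟨_, _, _, Ne.symm hfix, hne1, hne2, rfl⟩
      have hsub : {α, u α, u (u α)} ⊆ MulAction.orbit (Subgroup.closure {u, v}) α := by
        rintro x (rfl | rfl | rfl)
        · exact m
        · exact hmu _ _ m
        · exact hmu _ _ (hmu _ _ m)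
      have heq := Set.eq_of_subset_of_ncard_le hsub (by rw [hα, hcard])
        (Set.finite_of_ncard_ne_zero (by omega))
      have hvα := hmv _ _ m
      rw [← heq] at hvα
      rcases hvα with h | h | h
      · refine ⟨α, m, ?_⟩
        have := congrArg Subtype.val h
        rw [hv] at this
        -- `α² = 1`, and the root `-1` is excluded.
        have : ((α : ZMod p) - 1) * (1 + α) = 0 := by grind
        exact sub_eq_zero.1 ((mul_eq_zero.1 this).resolve_right ha1)
      · refine ⟨_, hmu _ _ (hmu _ _ m), ?_⟩
        have := congrArg Subtype.val h
        rw [hv, hu] at this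
        rw [huu]
        grind
      · refine ⟨_, hmu _ _ m, ?_⟩
        have := congrArg Subtype.val h
        rw [hv, huu] at this
        rw [hu]
        grind
end

section
/- Let p ≥ 5 be prime with p ≡ 1 (mod 3), X_p = {α ∈ ZMod p : α ≠ 0 and α ≠ -1}, and let O(α) denote the orbit of α under the group generated by U(α) = -(1+α)⁻¹ and V(α) = α⁻¹. Then the equation γ² + γ + 1 = 0 has exactly two solutions γ in ZMod p, both lying in X_p, and they are inverses of each other with γ⁻¹ = -1 - γ. For such a solution γ, the orbit O(γ) = {γ, γ⁻¹} has exactly two elements, and it is the unique orbit of cardinality two: if α ∈ X_p and O(α) has exactly two elements, then O(α) = {γ, γ⁻¹}. -/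
/-!
The roots of `x² + x + 1` are the elements of order three of `(ZMod p)ˣ`; they exist by Cauchy's
theorem because `3 ∣ p - 1`, and they are `γ` and `γ⁻¹ = -1 - γ`, which are distinct because
`(2γ + 1)² = -3 ≠ 0`. They are also exactly the fixed points of `U`.

Both `U` and `V` preserve the set of roots, so the orbit of a root `γ` lies in `{γ, γ⁻¹}`, and it
contains `γ⁻¹ = V γ` (`orbit_image_of_root`). Conversely `U³ = 1`, so a point `α` with `U α ≠ α`
has the three distinct points `α, U α, U² α` in its orbit; an orbit of cardinality two therefore
consists of roots (`root_of_orbit_ncard_two`).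
-/

/-- The set `X_p = ZMod p ∖ {0, -1}`. -/
abbrev FermatX (p : ℕ) := {α : ZMod p // α ≠ 0 ∧ α ≠ -1}

lemma u_mem_orbit {p : ℕ} {u v : Equiv.Perm (FermatX p)} {α β : FermatX p}
    (h : β ∈ MulAction.orbit (Subgroup.closure {u, v}) α) :
    u β ∈ MulAction.orbit (Subgroup.closure {u, v}) α :=
  MulAction.mem_orbit_of_mem_orbit (⟨u, Subgroup.subset_closure (by simp)⟩ :
    Subgroup.closure {u, v}) h

section

variable {p : ℕ} [Fact p.Prime]

lemma three_ne_zero_of_five_le (hp : 5 ≤ p) : (3 : ZMod p) ≠ 0 := by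
  intro h
  have h' : ((3 : ℕ) : ZMod p) = 0 := by exact_mod_cast h
  rw [ZMod.natCast_eq_zero_iff] at h'
  have := Nat.le_of_dvd (by norm_num) h'
  omega

lemma exists_root (hp3 : p % 3 = 1) : ∃ γ : ZMod p, γ ^ 2 + γ + 1 = 0 := by
  have : Fact (Nat.Prime 3) := ⟨Nat.prime_three⟩
  have hcard : 3 ∣ Fintype.card (ZMod p)ˣ := by
    rw [ZMod.card_units p]
    omega
  obtain ⟨x, hx⟩ := exists_prime_orderOf_dvd_card 3 hcard
  refine ⟨(x : ZMod p), ?_⟩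
  have h3 : (x : ZMod p) ^ 3 = 1 := by
    have := pow_orderOf_eq_one x
    rw [hx] at this
    simpa using congrArg Units.val this
  have h1 : (x : ZMod p) - 1 ≠ 0 := by
    intro h
    have hx1 : x = 1 := Units.ext (by simpa using sub_eq_zero.mp h)
    rw [hx1, orderOf_one] at hx
    omega
  apply mul_left_cancel₀ h1
  linear_combination h3

lemma root_ne_zero {γ : ZMod p} (h : γ ^ 2 + γ + 1 = 0) : γ ≠ 0 := by
  rintro rfl
  simp at h

lemma root_ne_neg_one {γ : ZMod p} (h : γ ^ 2 + γ + 1 = 0) : γ ≠ -1 := by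
  rintro rfl
  simp at h

lemma inv_of_root {γ : ZMod p} (h : γ ^ 2 + γ + 1 = 0) : γ⁻¹ = -1 - γ :=
  inv_eq_of_mul_eq_one_right (by linear_combination -h)

lemma root_inv {γ : ZMod p} (h : γ ^ 2 + γ + 1 = 0) : γ⁻¹ ^ 2 + γ⁻¹ + 1 = 0 := by
  rw [inv_of_root h]
  linear_combination h

lemma root_ne_inv (hp : 5 ≤ p) {γ : ZMod p} (h : γ ^ 2 + γ + 1 = 0) : γ ≠ γ⁻¹ := by
  rw [inv_of_root h]
  intro h2
  apply three_ne_zero_of_five_le hp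
  linear_combination 4 * h - (2 * γ + 1) * h2

lemma roots_eq {γ : ZMod p} (h : γ ^ 2 + γ + 1 = 0) :
    {x : ZMod p | x ^ 2 + x + 1 = 0} = {γ, γ⁻¹} := by
  ext x
  simp only [Set.mem_ofPred_eq, Set.mem_insert_iff, Set.mem_singleton_iff]
  constructor
  · intro hx
    have : (x - γ) * (x - (-1 - γ)) = 0 := by linear_combination hx - h
    rw [inv_of_root h]
    rcases mul_eq_zero.mp this with h' | h'
    · exact Or.inl (sub_eq_zero.mp h')
    · exact Or.inr (sub_eq_zero.mp h')
  · rintro (rfl | rfl)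
    · exact h
    · exact root_inv h

lemma one_add_ne_zero (α : FermatX p) : 1 + (α : ZMod p) ≠ 0 := fun h =>
  α.2.2 (by linear_combination h)

variable {u v : Equiv.Perm (FermatX p)}

lemma u_fixed_iff (hu : ∀ α : FermatX p, (↑(u α) : ZMod p) = -(1 + (α : ZMod p))⁻¹)
    (α : FermatX p) : u α = α ↔ (α : ZMod p) ^ 2 + (α : ZMod p) + 1 = 0 := by
  have h1 := one_add_ne_zero α
  rw [Subtype.ext_iff, hu]
  constructor
  · intro h
    have h2 := mul_inv_cancel₀ h1
    linear_combination -(1 + (α : ZMod p)) * h - h2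
  · intro h
    rw [neg_eq_iff_eq_neg]
    exact inv_eq_of_mul_eq_one_right (by linear_combination -h)

lemma u_cubed (hu : ∀ α : FermatX p, (↑(u α) : ZMod p) = -(1 + (α : ZMod p))⁻¹)
    (α : FermatX p) : u (u (u α)) = α := by
  have h1 := one_add_ne_zero α
  have h0 := α.2.1
  have e2 : ((u (u α) : FermatX p) : ZMod p) = -(1 + (α : ZMod p)) * (α : ZMod p)⁻¹ := by
    have : 1 + -(1 + (α : ZMod p))⁻¹ = (α : ZMod p) * (1 + (α : ZMod p))⁻¹ := by
      field_simp
      ring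
    rw [hu, hu, this, mul_inv, inv_inv]
    ring
  have e3 : 1 + -(1 + (α : ZMod p)) * (α : ZMod p)⁻¹ = -(α : ZMod p)⁻¹ := by
    field_simp
    ring
  rw [Subtype.ext_iff, hu, e2, e3, inv_neg, inv_inv, neg_neg]

/-- Every element of the group generated by `U` and `V` preserves the set of roots. The claim is
an equivalence so that it passes to inverses. -/
lemma root_smul_iff (hu : ∀ α : FermatX p, (↑(u α) : ZMod p) = -(1 + (α : ZMod p))⁻¹)
    (hv : ∀ α : FermatX p, (↑(v α) : ZMod p) = (α : ZMod p)⁻¹)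
    {g : Equiv.Perm (FermatX p)} (hg : g ∈ Subgroup.closure {u, v}) :
    ∀ x : FermatX p, ((g x : FermatX p) : ZMod p) ^ 2 + (g x : FermatX p) + 1 = 0 ↔
      (x : ZMod p) ^ 2 + (x : ZMod p) + 1 = 0 := by
  induction hg using Subgroup.closure_induction with
  | mem g hg =>
    intro x
    rcases hg with rfl | rfl
    · rw [← u_fixed_iff hu, ← u_fixed_iff hu, g.apply_eq_iff_eq]
    · rw [hv]
      refine ⟨fun h => ?_, root_inv⟩
      simpa using root_inv h
  | one => simp
  | mul g h _ _ ihg ihh =>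
    intro x
    rw [Equiv.Perm.mul_apply, ihg, ihh]
  | inv g _ ih =>
    intro x
    rw [← ih, ← Equiv.Perm.mul_apply, mul_inv_cancel, Equiv.Perm.one_apply]

lemma orbit_image_of_root (hu : ∀ α : FermatX p, (↑(u α) : ZMod p) = -(1 + (α : ZMod p))⁻¹)
    (hv : ∀ α : FermatX p, (↑(v α) : ZMod p) = (α : ZMod p)⁻¹)
    {γ : FermatX p} (h : (γ : ZMod p) ^ 2 + (γ : ZMod p) + 1 = 0) :
    Subtype.val '' MulAction.orbit (Subgroup.closure {u, v}) γ =
      ({(γ : ZMod p), (γ : ZMod p)⁻¹} : Set (ZMod p)) := by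
  apply Set.Subset.antisymm
  · rintro _ ⟨_, ⟨g, rfl⟩, rfl⟩
    rw [← roots_eq h]
    exact (root_smul_iff hu hv g.2 γ).mpr h
  · rintro x (rfl | rfl)
    · exact ⟨γ, MulAction.mem_orbit_self γ, rfl⟩
    · exact ⟨v γ, ⟨⟨v, Subgroup.subset_closure (by simp)⟩, rfl⟩, hv γ⟩

lemma root_of_orbit_ncard_two
    (hu : ∀ α : FermatX p, (↑(u α) : ZMod p) = -(1 + (α : ZMod p))⁻¹) {α : FermatX p}
    (h : (MulAction.orbit (Subgroup.closure {u, v}) α).ncard = 2) :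
    (α : ZMod p) ^ 2 + (α : ZMod p) + 1 = 0 := by
  rw [← u_fixed_iff hu]
  by_contra hne
  have m0 : α ∈ MulAction.orbit (Subgroup.closure {u, v}) α := MulAction.mem_orbit_self α
  have m1 := u_mem_orbit m0
  have m2 := u_mem_orbit m1
  have h12 : u α ≠ u (u α) := fun e => hne (u.injective e).symm
  -- If `U² α = α`, applying `U` once more gives `α = U³ α = U α`.
  have h02 : α ≠ u (u α) := fun e => hne (by
    have := congrArg u e
    rwa [u_cubed hu] at this)
  have hle : ({α, u α, u (u α)} : Set (FermatX p)).ncard ≤ 2 := by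
    rw [← h]
    apply Set.ncard_le_ncard _ (Set.toFinite _)
    rintro x (rfl | rfl | rfl) <;> assumption
  have h3 : ({α, u α, u (u α)} : Set (FermatX p)).ncard = 3 :=
    Set.ncard_eq_three.mpr ⟨α, u α, u (u α), fun e => hne e.symm, h02, h12, rfl⟩
  omega

end

/-- For a prime `p ≥ 5` with `p ≡ 1 (mod 3)`, the equation `γ² + γ + 1 = 0` has exactly two
solutions in `ZMod p`; each solution lies in `X_p` and its inverse `γ⁻¹ = -1 - γ` is again a
solution. The orbit of a solution `γ` under the group generated by `U(α) = -(1+α)⁻¹` and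
`V(α) = α⁻¹` is `{γ, γ⁻¹}`, of cardinality two, and it is the unique orbit of cardinality two. -/
theorem fermat_S3_orbit_card_two (p : ℕ) [Fact p.Prime] (hp : 5 ≤ p) (hp3 : p % 3 = 1)
    (u v : Equiv.Perm {α : ZMod p // α ≠ 0 ∧ α ≠ -1})
    (hu : ∀ α : {α : ZMod p // α ≠ 0 ∧ α ≠ -1}, (↑(u α) : ZMod p) = -(1 + (α : ZMod p))⁻¹)
    (hv : ∀ α : {α : ZMod p // α ≠ 0 ∧ α ≠ -1}, (↑(v α) : ZMod p) = ((α : ZMod p))⁻¹) :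
    ({γ : ZMod p | γ ^ 2 + γ + 1 = 0}).ncard = 2 ∧
    (∀ γ : ZMod p, γ ^ 2 + γ + 1 = 0 →
      γ ≠ 0 ∧ γ ≠ -1 ∧ (γ⁻¹) ^ 2 + γ⁻¹ + 1 = 0 ∧ γ⁻¹ = -1 - γ) ∧
    (∀ γ : {α : ZMod p // α ≠ 0 ∧ α ≠ -1}, (γ : ZMod p) ^ 2 + (γ : ZMod p) + 1 = 0 →
      Subtype.val '' MulAction.orbit (Subgroup.closure {u, v}) γ =
        ({(γ : ZMod p), ((γ : ZMod p))⁻¹} : Set (ZMod p)) ∧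
      (MulAction.orbit (Subgroup.closure {u, v}) γ).ncard = 2) ∧
    (∀ γ : ZMod p, γ ^ 2 + γ + 1 = 0 →
      ∀ α : {α : ZMod p // α ≠ 0 ∧ α ≠ -1},
        (MulAction.orbit (Subgroup.closure {u, v}) α).ncard = 2 →
        Subtype.val '' MulAction.orbit (Subgroup.closure {u, v}) α =
          ({γ, γ⁻¹} : Set (ZMod p))) := by
  obtain ⟨γ₀, h₀⟩ := exists_root hp3
  refine ⟨?_, ?_, ?_, ?_⟩
  · rw [roots_eq h₀]
    exact Set.ncard_pair (root_ne_inv hp h₀)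
  · intro γ h
    exact ⟨root_ne_zero h, root_ne_neg_one h, root_inv h, inv_of_root h⟩
  · intro γ h
    refine ⟨orbit_image_of_root hu hv h, ?_⟩
    rw [← Set.ncard_image_of_injective _ Subtype.val_injective, orbit_image_of_root hu hv h]
    exact Set.ncard_pair (root_ne_inv hp h)
  · intro γ h α hα
    have hroot := root_of_orbit_ncard_two hu hα
    rw [orbit_image_of_root hu hv hroot, ← roots_eq hroot, roots_eq h]
end

section
/- Let p ≥ 5 be prime with p ≡ 2 (mod 3), X_p = {α ∈ ZMod p : α ≠ 0 and α ≠ -1}, and let O(α) denote the orbit of α under the group generated by U(α) = -(1+α)⁻¹ and V(α) = α⁻¹. Then for every α ∈ X_p with α ∉ {1, -2, -2⁻¹}, the orbit O(α) has exactly six elements. -/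
/-!
The maps `U` and `V` satisfy `U³ = V² = 1` and `V U = U² V`, so the orbit of `a` consists of
`a, U a, U² a, V a, U V a, U² V a`, whose values are
`a, -1/(1+a), -(1+a)/a, 1/a, -a/(1+a), -(1+a)`.
Two of these coincide only if one of `a = 1`, `a = -2`, `2a = -1`, `a² + a + 1 = 0` holds.
The first three are excluded by hypothesis. The last one would make `a` a cube root of unity, and
as `p ≡ 2 (mod 3)`, Fermat's little theorem would then force `a = 1`.
-/

/-- For `p ≡ 2 (mod 3)` the only possible root of `X² + X + 1` in `ZMod p` is `1`, because `3` is
coprime to `p - 1`. -/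
theorem sq_add_self_add_one_ne_zero {p : ℕ} [Fact p.Prime] (hp3 : p % 3 = 2) {a : ZMod p}
    (h0 : a ≠ 0) (h1 : a ≠ 1) : a ^ 2 + a + 1 ≠ 0 := by
  intro h
  have h3 : a ^ 3 = 1 := by linear_combination (a - 1) * h
  have hf := ZMod.pow_card_sub_one_eq_one h0
  have hk : p - 1 = 3 * (p / 3) + 1 := by omega
  rw [hk, pow_succ, pow_mul, h3, one_pow, one_mul] at hf
  exact h1 hf

/-- For a prime `p ≥ 5` with `p ≡ 2 (mod 3)`, every element of `X_p` outside `{1, -2, -2⁻¹}`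
has an orbit of exactly six elements under the group generated by `U(α) = -(1+α)⁻¹` and
`V(α) = α⁻¹`. -/
theorem fermat_S3_orbit_card_six_two_mod_three (p : ℕ) [Fact p.Prime] (hp : 5 ≤ p)
    (hp3 : p % 3 = 2)
    (u v : Equiv.Perm {α : ZMod p // α ≠ 0 ∧ α ≠ -1})
    (hu : ∀ α : {α : ZMod p // α ≠ 0 ∧ α ≠ -1}, (↑(u α) : ZMod p) = -(1 + (α : ZMod p))⁻¹)
    (hv : ∀ α : {α : ZMod p // α ≠ 0 ∧ α ≠ -1}, (↑(v α) : ZMod p) = ((α : ZMod p))⁻¹)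
    (α : {α : ZMod p // α ≠ 0 ∧ α ≠ -1})
    (hα : (α : ZMod p) ∉ ({1, -2, -(2 : ZMod p)⁻¹} : Set (ZMod p))) :
    (MulAction.orbit (Subgroup.closure {u, v}) α).ncard = 6 := by
  obtain ⟨a, h0, hm1⟩ := α
  simp only [Set.mem_insert_iff, Set.mem_singleton_iff, not_or] at hα
  obtain ⟨h1, h2, h2'⟩ := hα
  have hq := sq_add_self_add_one_ne_zero hp3 h0 h1
  have hs : 1 + a ≠ 0 := fun h => hm1 (by linear_combination h)
  have hd : a - 1 ≠ 0 := sub_ne_zero.mpr h1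
  have ht : a + 2 ≠ 0 := fun h => h2 (by linear_combination h)
  have htwo : (2 : ZMod p) ≠ 0 := by
    intro h
    have h' : ((2 : ℕ) : ZMod p) = 0 := by exact_mod_cast h
    rw [ZMod.natCast_eq_zero_iff] at h'
    exact absurd (Nat.le_of_dvd (by norm_num) h') (by omega)
  have hr : 2 * a + 1 ≠ 0 := fun h => h2' (by field_simp; linear_combination h)
  have one_add_ne (x : {α : ZMod p // α ≠ 0 ∧ α ≠ -1}) : 1 + (x : ZMod p) ≠ 0 :=
    fun h => x.2.2 (by linear_combination h)
  have huu (x) : ((u (u x) : {α : ZMod p // α ≠ 0 ∧ α ≠ -1}) : ZMod p) =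
      -(1 + (x : ZMod p)) / x := by
    have hx := x.2.1
    have hx1 := one_add_ne x
    have hne : 1 + -(1 + (x : ZMod p))⁻¹ = x / (1 + x) := by field_simp; ring
    rw [hu, hu, hne, inv_div, neg_div]
  have huuu (x) : u (u (u x)) = x := by
    apply Subtype.ext
    have hx1 := one_add_ne x
    rw [huu, hu]
    field_simp
    ring
  have hvv (x) : v (v x) = x := by
    apply Subtype.ext
    rw [hv, hv, inv_inv]
  have hvu (x) : v (u x) = u (u (v x)) := by
    apply Subtype.ext
    have hx := x.2.1
    have hx1 := one_add_ne x
    rw [hv, huu, hu, hv]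
    field_simp
    ring
  set α : {α : ZMod p // α ≠ 0 ∧ α ≠ -1} := ⟨a, h0, hm1⟩ with hαdef
  have horb : MulAction.orbit (Subgroup.closure {u, v}) α =
      {α, u α, u (u α), v α, u (v α), u (u (v α))} := by
    apply Set.Subset.antisymm
    · rintro _ ⟨⟨g, hg⟩, rfl⟩
      -- The equivalence, unlike a one-sided implication, passes to inverses.
      have key : ∀ x, x ∈ ({α, u α, u (u α), v α, u (v α), u (u (v α))} : Set _) ↔
          g x ∈ ({α, u α, u (u α), v α, u (v α), u (u (v α))} : Set _) := by
        induction hg using Subgroup.closure_induction with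
        | mem g hg =>
          have hmaps_u : ∀ x, x ∈ ({α, u α, u (u α), v α, u (v α), u (u (v α))} : Set _) →
              u x ∈ ({α, u α, u (u α), v α, u (v α), u (u (v α))} : Set _) := by
            rintro x (rfl | rfl | rfl | rfl | rfl | rfl) <;> simp [huuu]
          have hmaps_v : ∀ x, x ∈ ({α, u α, u (u α), v α, u (v α), u (u (v α))} : Set _) →
              v x ∈ ({α, u α, u (u α), v α, u (v α), u (u (v α))} : Set _) := by
            rintro x (rfl | rfl | rfl | rfl | rfl | rfl) <;> simp [huuu, hvu, hvv]
          rcases hg with rfl | rfl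
          · refine fun x => ⟨hmaps_u x, fun h => ?_⟩
            have := hmaps_u _ (hmaps_u _ h)
            rwa [huuu] at this
          · refine fun x => ⟨hmaps_v x, fun h => ?_⟩
            have := hmaps_v _ h
            rwa [hvv] at this
        | one => exact fun x => Iff.rfl
        | mul g h _ _ ihg ihh => exact fun x => (ihh x).trans (ihg (h x))
        | inv g _ ih =>
          intro x
          simpa using (ih (g⁻¹ x)).symm
      exact (key α).mp (Or.inl rfl)
    · have hmu : u ∈ Subgroup.closure {u, v} := Subgroup.subset_closure (by simp)
      have hmv : v ∈ Subgroup.closure {u, v} := Subgroup.subset_closure (by simp)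
      rintro x (rfl | rfl | rfl | rfl | rfl | rfl)
      · exact ⟨1, rfl⟩
      · exact ⟨⟨u, hmu⟩, rfl⟩
      · exact ⟨⟨u * u, mul_mem hmu hmu⟩, rfl⟩
      · exact ⟨⟨v, hmv⟩, rfl⟩
      · exact ⟨⟨u * v, mul_mem hmu hmv⟩, rfl⟩
      · exact ⟨⟨u * (u * v), mul_mem hmu (mul_mem hmu hmv)⟩, rfl⟩
  have e1 : (u α : ZMod p) = -(1 + a)⁻¹ := hu α
  have e2 : (u (u α) : ZMod p) = -(1 + a) / a := huu α
  have e3 : (v α : ZMod p) = a⁻¹ := hv α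
  have e4 : (u (v α) : ZMod p) = -a / (1 + a) := by
    have : 1 + a⁻¹ = (1 + a) / a := by field_simp; ring
    rw [hu, e3, this, inv_div, neg_div]
  have e5 : (u (u (v α)) : ZMod p) = -(1 + a) := by
    rw [huu, e3]
    field_simp
    ring
  -- Each coincidence kills a product of the nonzero factors `a`, `1+a`, `a-1`, `a+2`, `2a+1`,
  -- `a²+a+1`.
  rw [horb, Set.ncard_insert_of_notMem, Set.ncard_insert_of_notMem, Set.ncard_insert_of_notMem,
    Set.ncard_insert_of_notMem, Set.ncard_insert_of_notMem, Set.ncard_singleton]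
  all_goals
    simp only [Set.mem_insert_iff, Set.mem_singleton_iff, not_or, Subtype.ext_iff, e1, e2, e3, e4,
      e5]
    clear_value α
    grind
end

section
/- Let p ≥ 5 be prime with p ≡ 1 (mod 3), X_p = {α ∈ ZMod p : α ≠ 0 and α ≠ -1}, let O(α) denote the orbit of α under the group generated by U(α) = -(1+α)⁻¹ and V(α) = α⁻¹, and let γ ∈ ZMod p satisfy γ² + γ + 1 = 0. Then for every α ∈ X_p with α ∉ {1, -2, -2⁻¹, γ, -1-γ}, the orbit O(α) has exactly six elements. -/
/-!
The maps satisfy `u³ = 1`, `v² = 1`, `v u = u² v`, so `⟨u, v⟩` is a quotient of `S₃` and the orbit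
of `α` is `{α, uα, u²α, vα, uvα, u²vα}`. These six points are distinct as soon as none of
`u, v, uv, u²v` fixes `α` (`orbit_ncard_eq_six`). The fixed-point equations in the field are:
`uα = α` iff `α² + α + 1 = 0`, i.e. `α ∈ {γ, -1-γ}`; `vα = α` iff `α² = 1`, i.e. `α = 1`;
`uvα = α` iff `α = -2`; `u²vα = α` iff `2α = -1`.
-/

/-- Two permutations satisfying the defining relations of `S₃` generate a group for which a point
fixed neither by `u` nor by any of the three reflections `v, uv, u²v` has a regular orbit. -/
lemma orbit_ncard_eq_six {X : Type*} (u v : Equiv.Perm X)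
    (huuu : ∀ x, u (u (u x)) = x) (hvv : ∀ x, v (v x) = x) (hvu : ∀ x, v (u x) = u (u (v x)))
    (a : X) (h1 : u a ≠ a) (h2 : v a ≠ a) (h3 : u (v a) ≠ a) (h4 : u (u (v a)) ≠ a) :
    (MulAction.orbit (Subgroup.closure {u, v}) a).ncard = 6 := by
  classical
  have horb : MulAction.orbit (Subgroup.closure {u, v}) a =
      (({a, u a, u (u a), v a, u (v a), u (u (v a))} : Finset X) : Set X) := by
    have huS : u ∈ Subgroup.closure {u, v} := Subgroup.subset_closure (by simp)
    have hvS : v ∈ Subgroup.closure {u, v} := Subgroup.subset_closure (by simp)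
    ext x
    constructor
    · rintro ⟨⟨g, hg⟩, rfl⟩
      change g a ∈ _
      -- Stability under `u` and `v` suffices, since `u⁻¹ = u²` and `v⁻¹ = v`.
      induction hg using Subgroup.closure_induction_left with
      | one => simp
      | mul_left y hy z hz ih =>
        rw [Equiv.Perm.mul_apply]
        simp only [Finset.coe_insert, Finset.coe_singleton, Set.mem_insert_iff,
          Set.mem_singleton_iff] at ih hy ⊢
        rcases hy with rfl | rfl <;> rcases ih with h | h | h | h | h | h <;>
          simp [h, huuu, hvv, hvu]
      | inv_mul_cancel y hy z hz ih =>
        rw [Equiv.Perm.mul_apply]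
        have hui : ∀ x, u⁻¹ x = u (u x) := fun x => by
          rw [Equiv.Perm.inv_eq_iff_eq, huuu]
        have hvi : ∀ x, v⁻¹ x = v x := fun x => by
          rw [Equiv.Perm.inv_eq_iff_eq, hvv]
        simp only [Finset.coe_insert, Finset.coe_singleton, Set.mem_insert_iff,
          Set.mem_singleton_iff] at ih hy ⊢
        rcases hy with rfl | rfl <;> rcases ih with h | h | h | h | h | h <;>
          simp [h, hui, hvi, huuu, hvv, hvu]
    · intro hx
      simp only [Finset.coe_insert, Finset.coe_singleton, Set.mem_insert_iff,
        Set.mem_singleton_iff] at hx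
      rcases hx with rfl | rfl | rfl | rfl | rfl | rfl
      · exact MulAction.mem_orbit_self _
      · exact ⟨⟨u, huS⟩, rfl⟩
      · exact ⟨⟨u, huS⟩ * ⟨u, huS⟩, rfl⟩
      · exact ⟨⟨v, hvS⟩, rfl⟩
      · exact ⟨⟨u, huS⟩ * ⟨v, hvS⟩, rfl⟩
      · exact ⟨⟨u, huS⟩ * (⟨u, huS⟩ * ⟨v, hvS⟩), rfl⟩
  -- Apart from the hypotheses, distinctness of the six points needs only these two facts.
  have h5 : u (u a) ≠ a := fun h => h1 (by have := huuu a; rwa [h] at this)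
  have h6 : u (v a) ≠ v a := fun h => h5 (v.injective (by rw [hvu, hvu, huuu, h]))
  rw [horb, Set.ncard_coe_finset]
  have e1 := huuu a
  have e2 := huuu (v a)
  repeat rw [Finset.card_insert_of_notMem]
  · simp
  all_goals
    simp only [Finset.mem_insert, Finset.mem_singleton, not_or]
    grind

/-- For a prime `p ≥ 5` with `p ≡ 1 (mod 3)` and `γ ∈ ZMod p` with `γ² + γ + 1 = 0`, every
element of `X_p` outside `{1, -2, -2⁻¹, γ, -1-γ}` has an orbit of exactly six elements under
the group generated by `U(α) = -(1+α)⁻¹` and `V(α) = α⁻¹`. -/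
theorem fermat_S3_orbit_card_six_one_mod_three (p : ℕ) [Fact p.Prime] (hp : 5 ≤ p)
    (hp3 : p % 3 = 1)
    (u v : Equiv.Perm {α : ZMod p // α ≠ 0 ∧ α ≠ -1})
    (hu : ∀ α : {α : ZMod p // α ≠ 0 ∧ α ≠ -1}, (↑(u α) : ZMod p) = -(1 + (α : ZMod p))⁻¹)
    (hv : ∀ α : {α : ZMod p // α ≠ 0 ∧ α ≠ -1}, (↑(v α) : ZMod p) = ((α : ZMod p))⁻¹)
    (γ : ZMod p) (hγ : γ ^ 2 + γ + 1 = 0)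
    (α : {α : ZMod p // α ≠ 0 ∧ α ≠ -1})
    (hα : (α : ZMod p) ∉ ({1, -2, -(2 : ZMod p)⁻¹, γ, -1 - γ} : Set (ZMod p))) :
    (MulAction.orbit (Subgroup.closure {u, v}) α).ncard = 6 := by
  obtain ⟨a, ha0, ha1⟩ := α
  simp only [Set.mem_insert_iff, Set.mem_singleton_iff, not_or] at hα
  obtain ⟨k1, k2, k3, k4, k5⟩ := hα
  have hs : ∀ x : ZMod p, x ≠ -1 → 1 + x ≠ 0 := fun x hx h => hx (by linear_combination h)
  have h1a := hs a ha1
  have huu : ∀ x, (↑(u (u x)) : ZMod p) = -(1 + (x : ZMod p)) * (x : ZMod p)⁻¹ := by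
    rintro ⟨x, hx0, hx1⟩
    have h1 := hs x hx1
    have h2 : 1 + -(1 + x)⁻¹ = x * (1 + x)⁻¹ := by field_simp; ring
    rw [hu, hu]
    simp only [h2]
    field_simp
  refine orbit_ncard_eq_six u v ?_ ?_ ?_ _ ?_ ?_ ?_ ?_
  · rintro ⟨x, hx0, hx1⟩
    have h1 := hs x hx1
    apply Subtype.ext
    rw [huu, hu]
    simp only
    field_simp
    ring
  · intro x
    apply Subtype.ext
    rw [hv, hv, inv_inv]
  · rintro ⟨x, hx0, hx1⟩
    have h1 := hs x hx1
    apply Subtype.ext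
    rw [huu, hv, hu, hv]
    simp only
    field_simp
    ring
  · intro h
    have h := congrArg Subtype.val h
    rw [hu] at h
    simp only at h
    field_simp at h
    have : (a - γ) * (a - (-1 - γ)) = 0 := by linear_combination -h - hγ
    rcases mul_eq_zero.mp this with h | h
    · exact k4 (sub_eq_zero.mp h)
    · exact k5 (sub_eq_zero.mp h)
  · intro h
    have h := congrArg Subtype.val h
    rw [hv] at h
    simp only at h
    field_simp at h
    have : (a - 1) * (a - (-1)) = 0 := by linear_combination -h
    rcases mul_eq_zero.mp this with h | h
    · exact k1 (sub_eq_zero.mp h)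
    · exact ha1 (sub_eq_zero.mp h)
  · intro h
    have h := congrArg Subtype.val h
    have h2 : 1 + a⁻¹ = (1 + a) * a⁻¹ := by field_simp; ring
    rw [hu, hv] at h
    simp only [h2] at h
    field_simp at h
    exact k2 (by linear_combination -h)
  · intro h
    have h := congrArg Subtype.val h
    rw [huu, hv] at h
    simp only at h
    field_simp at h
    -- If `2 = 0`, the equation `2 * a = -1` already fails.
    have h2 : (2 : ZMod p) ≠ 0 := fun h2 => one_ne_zero (α := ZMod p) (by
      linear_combination -h - a * h2)
    apply k3
    field_simp
    linear_combination -h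
end

section
/- Let p ≥ 5 be prime with p ≡ 1 (mod 3), X_p = {α ∈ ZMod p : α ≠ 0 and α ≠ -1}, and consider the action on X_p of the group generated by U(α) = -(1+α)⁻¹ and V(α) = α⁻¹. Then the number of orbits of this action having exactly six elements is (p-7)/6. -/
/-!
The transformations `U` and `V` satisfy `U³ = V² = 1` and `UV = VU²`, so the orbit of `α` is
`{α, Uα, U²α, Vα, VUα, VU²α}` (`orbit_eq_six`). Over a field, two of these six values coincide
exactly when `α` is a root of `(α - 1)(α + 2)(2α + 1)(α² + α + 1)`; the nontrivial direction is
`six_values_distinct`. Since `p ≡ 1 (mod 3)`, this polynomial has exactly five roots in `ZMod p`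
(`special_card`), all of them in `X_p`, and its root set is stable under the group, so a root
cannot have an orbit of size six. Hence the six-element orbits partition the remaining
`(p - 2) - 5 = p - 7` points of `X_p`.
-/

/-- A set stable under two permutations and their inverses contains the orbits of its points
under the group they generate. -/
lemma orbit_subset_of_stable_s6 {X : Type*} (u v : Equiv.Perm X) (A : Set X)
    (hu : ∀ x, u x ∈ A ↔ x ∈ A) (hv : ∀ x, v x ∈ A ↔ x ∈ A) {a : X} (ha : a ∈ A) :
    MulAction.orbit (Subgroup.closure {u, v}) a ⊆ A := by
  have key : ∀ g ∈ Subgroup.closure {u, v}, ∀ x, g x ∈ A ↔ x ∈ A := by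
    intro g hg
    induction hg using Subgroup.closure_induction with
    | mem g hg =>
      rcases hg with rfl | rfl
      · exact hu
      · exact hv
    | one => simp
    | mul g h _ _ ihg ihh =>
      intro x
      rw [Equiv.Perm.mul_apply, ihg, ihh]
    | inv g _ ih =>
      intro x
      rw [← ih (g⁻¹ x), ← Equiv.Perm.mul_apply, mul_inv_cancel, Equiv.Perm.one_apply]
  rintro _ ⟨⟨g, hg⟩, rfl⟩
  exact (key g hg a).2 ha

lemma orbit_eq_six {X : Type*} (u v : Equiv.Perm X) (hu3 : ∀ x, u (u (u x)) = x)
    (hv2 : ∀ x, v (v x) = x) (huv : ∀ x, u (v x) = v (u (u x))) (a : X) :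
    MulAction.orbit (Subgroup.closure {u, v}) a =
      {a, u a, u (u a), v a, v (u a), v (u (u a))} := by
  have hmu : ∀ x b, x ∈ MulAction.orbit (Subgroup.closure {u, v}) b →
      u x ∈ MulAction.orbit (Subgroup.closure {u, v}) b := fun x b hx =>
    MulAction.mem_orbit_of_mem_orbit
      (⟨u, Subgroup.subset_closure (by simp)⟩ : Subgroup.closure {u, v}) hx
  have hmv : ∀ x b, x ∈ MulAction.orbit (Subgroup.closure {u, v}) b →
      v x ∈ MulAction.orbit (Subgroup.closure {u, v}) b := fun x b hx =>
    MulAction.mem_orbit_of_mem_orbit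
      (⟨v, Subgroup.subset_closure (by simp)⟩ : Subgroup.closure {u, v}) hx
  have h0 := MulAction.mem_orbit_self (M := Subgroup.closure {u, v}) a
  apply Set.Subset.antisymm
  · -- Forward stability suffices, because the inverses of `u` and `v` are `u ∘ u` and `v`.
    have fu : ∀ x, x ∈ ({a, u a, u (u a), v a, v (u a), v (u (u a))} : Set X) →
        u x ∈ ({a, u a, u (u a), v a, v (u a), v (u (u a))} : Set X) := by
      rintro x (rfl | rfl | rfl | rfl | rfl | rfl) <;> simp [hu3, huv]
    have fv : ∀ x, x ∈ ({a, u a, u (u a), v a, v (u a), v (u (u a))} : Set X) →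
        v x ∈ ({a, u a, u (u a), v a, v (u a), v (u (u a))} : Set X) := by
      rintro x (rfl | rfl | rfl | rfl | rfl | rfl) <;> simp [hv2]
    refine orbit_subset_of_stable_s6 u v _ (fun x => ⟨fun h => ?_, fu x⟩)
      (fun x => ⟨fun h => ?_, fv x⟩) (by simp)
    · simpa only [hu3] using fu _ (fu _ h)
    · simpa only [hv2] using fv _ h
  · rintro x (rfl | rfl | rfl | rfl | rfl | rfl)
    · exact h0
    · exact hmu _ _ h0
    · exact hmu _ _ (hmu _ _ h0)
    · exact hmv _ _ h0
    · exact hmv _ _ (hmu _ _ h0)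
    · exact hmv _ _ (hmu _ _ (hmu _ _ h0))

/-- The polynomial whose roots are the points with an orbit of fewer than six elements. -/
def specialPoly {K : Type*} [Field K] (a : K) : K :=
  (a - 1) * (a + 2) * (2 * a + 1) * (a ^ 2 + a + 1)

/-- The list consists of `α, Uα, U²α, Vα, VUα, VU²α`, written as rational functions of `α`. -/
lemma six_values_distinct {K : Type*} [Field K] (a : K) (h0 : a ≠ 0) (h1 : 1 + a ≠ 0)
    (hs : specialPoly a ≠ 0) :
    [a, -(1 + a)⁻¹, -(1 + a) * a⁻¹, a⁻¹, -(1 + a), -a * (1 + a)⁻¹].Nodup := by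
  simp only [specialPoly, mul_ne_zero_iff] at hs
  obtain ⟨⟨⟨s1, s2⟩, s3⟩, s4⟩ := hs
  simp only [List.nodup_cons, List.mem_cons, List.not_mem_nil, not_or, or_false, not_false_eq_true,
    List.nodup_nil, and_true]
  refine ⟨⟨?_, ?_, ?_, ?_, ?_⟩, ⟨?_, ?_, ?_, ?_⟩, ⟨?_, ?_, ?_⟩, ⟨?_, ?_⟩, ?_⟩ <;> intro h <;>
    field_simp at h <;> grind

lemma special_card (p : ℕ) [Fact p.Prime] (hp : 5 ≤ p) (hp3 : p % 3 = 1) :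
    {a : ZMod p | specialPoly a = 0}.ncard = 5 := by
  have h2 : (2 : ZMod p) ≠ 0 := by
    intro h
    have : ((2 : ℕ) : ZMod p) = 0 := by exact_mod_cast h
    rw [ZMod.natCast_eq_zero_iff] at this
    have := Nat.le_of_dvd (by norm_num) this
    omega
  have h3 : (3 : ZMod p) ≠ 0 := by
    intro h
    have : ((3 : ℕ) : ZMod p) = 0 := by exact_mod_cast h
    rw [ZMod.natCast_eq_zero_iff] at this
    have := Nat.le_of_dvd (by norm_num) this
    omega
  obtain ⟨w, hw⟩ : ∃ w : ZMod p, w ^ 2 + w + 1 = 0 := by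
    have : Fact (Nat.Prime 3) := ⟨Nat.prime_three⟩
    obtain ⟨g, hg⟩ := exists_prime_orderOf_dvd_card (G := (ZMod p)ˣ) 3
      (by rw [ZMod.card_units]; omega)
    have hg3 : ((g : ZMod p)) ^ 3 = 1 := by
      rw [← Units.val_pow_eq_pow_val, ← hg, pow_orderOf_eq_one, Units.val_one]
    have hg1 : (g : ZMod p) - 1 ≠ 0 := by
      intro h
      have : g = 1 := Units.ext (by simpa using sub_eq_zero.1 h)
      rw [this, orderOf_one] at hg
      omega
    exact ⟨g, mul_left_cancel₀ hg1 (by linear_combination hg3)⟩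
  have hset : {a : ZMod p | specialPoly a = 0} =
      (({1, -2, -2⁻¹, w, -1 - w} : Finset (ZMod p)) : Set (ZMod p)) := by
    ext a
    simp only [specialPoly, Set.mem_ofPred_eq, mul_eq_zero, Finset.coe_insert,
      Finset.coe_singleton, Set.mem_insert_iff, Set.mem_singleton_iff]
    have e4 : a ^ 2 + a + 1 = (a - w) * (a - (-1 - w)) := by linear_combination hw
    have e3 : 2 * a + 1 = 0 ↔ a = -2⁻¹ := by
      constructor
      · intro h; field_simp; linear_combination h
      · rintro rfl; field_simp; ring
    rw [e4, e3, mul_eq_zero, sub_eq_zero, sub_eq_zero, sub_eq_zero, add_eq_zero_iff_eq_neg]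
    tauto
  rw [hset, Set.ncard_coe_finset]
  have hi : (2 : ZMod p) * 2⁻¹ = 1 := mul_inv_cancel₀ h2
  have h9 : (9 : ZMod p) ≠ 0 := by
    have : (9 : ZMod p) = 3 * 3 := by norm_num
    rw [this]; exact mul_ne_zero h3 h3
  generalize (2 : ZMod p)⁻¹ = i at hi
  have n1 : (1 : ZMod p) ≠ -2 := by grind
  have n2 : (1 : ZMod p) ≠ -i := by grind
  have n3 : (1 : ZMod p) ≠ w := by grind
  have n4 : (1 : ZMod p) ≠ -1 - w := by grind
  have n5 : (-2 : ZMod p) ≠ -i := by grind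
  have n6 : (-2 : ZMod p) ≠ w := by grind
  have n7 : (-2 : ZMod p) ≠ -1 - w := by grind
  have n8 : -i ≠ w := by grind
  have n9 : -i ≠ -1 - w := by grind
  have n10 : w ≠ -1 - w := by grind
  rw [Finset.card_insert_of_notMem (by simp [*]), Finset.card_insert_of_notMem (by simp [*]),
    Finset.card_insert_of_notMem (by simp [*]), Finset.card_insert_of_notMem (by simp [*]),
    Finset.card_singleton]


/-- For a prime `p ≥ 5` with `p ≡ 1 (mod 3)`, the number of orbits of cardinality six of the
action on `X_p` of the group generated by `U(α) = -(1+α)⁻¹` and `V(α) = α⁻¹` is `(p-7)/6`. -/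
theorem fermat_S3_number_of_six_orbits_one_mod_three (p : ℕ) [Fact p.Prime] (hp : 5 ≤ p)
    (hp3 : p % 3 = 1)
    (u v : Equiv.Perm {α : ZMod p // α ≠ 0 ∧ α ≠ -1})
    (hu : ∀ α : {α : ZMod p // α ≠ 0 ∧ α ≠ -1}, (↑(u α) : ZMod p) = -(1 + (α : ZMod p))⁻¹)
    (hv : ∀ α : {α : ZMod p // α ≠ 0 ∧ α ≠ -1}, (↑(v α) : ZMod p) = ((α : ZMod p))⁻¹) :
    Set.ncard {s : Set {α : ZMod p // α ≠ 0 ∧ α ≠ -1} |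
      (∃ α, s = MulAction.orbit (Subgroup.closure {u, v}) α) ∧ s.ncard = 6} = (p - 7) / 6 := by
  classical
  have c0 : ∀ α : {α : ZMod p // α ≠ 0 ∧ α ≠ -1}, (α : ZMod p) ≠ 0 := fun α => α.2.1
  have c1 : ∀ α : {α : ZMod p // α ≠ 0 ∧ α ≠ -1}, 1 + (α : ZMod p) ≠ 0 := fun α h =>
    α.2.2 (by linear_combination h)
  have huu : ∀ α, (↑(u (u α)) : ZMod p) = -(1 + (α : ZMod p)) * (α : ZMod p)⁻¹ := by
    intro α
    have h := c1 (u α)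
    have h0 := c0 α
    have h1 := c1 α
    rw [hu] at h
    rw [hu, hu]
    have e : 1 + -(1 + (α : ZMod p))⁻¹ = α * (1 + (α : ZMod p))⁻¹ := by field_simp; ring
    rw [e]
    field_simp
  have hu3 : ∀ α, u (u (u α)) = α := by
    intro α
    apply Subtype.ext
    have h0 := c0 α
    rw [hu, huu]
    have e : 1 + -(1 + (α : ZMod p)) * (α : ZMod p)⁻¹ = -(α : ZMod p)⁻¹ := by field_simp; ring
    rw [e, inv_neg, inv_inv, neg_neg]
  have hv2 : ∀ α, v (v α) = α := by
    intro α
    apply Subtype.ext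
    rw [hv, hv, inv_inv]
  have hvuu : ∀ α, (↑(v (u (u α))) : ZMod p) = -(α : ZMod p) * (1 + (α : ZMod p))⁻¹ := by
    intro α
    have h0 := c0 α
    have h1 := c1 α
    rw [hv, huu]
    field_simp
  have huv : ∀ α, u (v α) = v (u (u α)) := by
    intro α
    apply Subtype.ext
    have h0 := c0 α
    have h1 := c1 α
    rw [hu, hv, hvuu]
    have e : 1 + (α : ZMod p)⁻¹ = (1 + (α : ZMod p)) * (α : ZMod p)⁻¹ := by field_simp; ring
    rw [e, mul_inv, inv_inv]
    ring
  have hvu : ∀ α, (↑(v (u α)) : ZMod p) = -(1 + (α : ZMod p)) := by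
    intro α
    rw [hv, hu, inv_neg, inv_inv]
  have horb := orbit_eq_six u v hu3 hv2 huv
  set B : Set {α : ZMod p // α ≠ 0 ∧ α ≠ -1} := {α | specialPoly (α : ZMod p) = 0} with hB
  have hBcard : B.ncard = 5 := by
    rw [← special_card p hp hp3, ← Set.ncard_image_of_injective B Subtype.val_injective]
    congr 1
    ext a
    constructor
    · rintro ⟨α, hα, rfl⟩
      exact hα
    · intro ha
      refine ⟨⟨a, ?_, ?_⟩, ha, rfl⟩ <;> rintro rfl <;>
        simp only [specialPoly, Set.mem_ofPred_eq] at ha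
      -- The polynomial takes the values `-2` and `2` at `0` and `-1`.
      all_goals
        have h2 : ((2 : ℕ) : ZMod p) = 0 := by
          push_cast
          first
          | linear_combination ha
          | linear_combination -ha
        rw [ZMod.natCast_eq_zero_iff] at h2
        have := Nat.le_of_dvd (by norm_num) h2
        omega
  have fu : ∀ x, x ∈ B → u x ∈ B := by
    intro x hx
    have h1 := c1 x
    simp only [hB, Set.mem_ofPred_eq, specialPoly] at hx ⊢
    rw [hu]
    field_simp
    linear_combination -hx
  have fv : ∀ x, x ∈ B → v x ∈ B := by
    intro x hx
    have h0 := c0 x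
    simp only [hB, Set.mem_ofPred_eq, specialPoly] at hx ⊢
    rw [hv]
    field_simp
    linear_combination -hx
  have hBorb : ∀ α ∈ B, MulAction.orbit (Subgroup.closure {u, v}) α ⊆ B := by
    intro α hα
    refine orbit_subset_of_stable_s6 u v B (fun x => ⟨fun h => ?_, fu x⟩)
      (fun x => ⟨fun h => ?_, fv x⟩) hα
    · simpa only [hu3] using fu _ (fu _ h)
    · simpa only [hv2] using fv _ h
  have h6 : ∀ α, (MulAction.orbit (Subgroup.closure {u, v}) α).ncard = 6 ↔ α ∉ B := by
    intro α
    constructor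
    · intro h hα
      have := Set.ncard_le_ncard (hBorb α hα) (Set.toFinite _)
      omega
    · intro hα
      have hnd := six_values_distinct (α : ZMod p) (c0 α) (c1 α) hα
      have hnd' : [α, u α, u (u α), v α, v (u α), v (u (u α))].Nodup := by
        apply List.Nodup.of_map Subtype.val
        simpa only [List.map_cons, List.map_nil, hvuu, hvu, huu, hu, hv] using hnd
      have e : ({α, u α, u (u α), v α, v (u α), v (u (u α))} :
          Set {α : ZMod p // α ≠ 0 ∧ α ≠ -1}) =
          ([α, u α, u (u α), v α, v (u α), v (u (u α))].toFinset : Set _) := by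
        ext x; simp
      rw [horb, e, Set.ncard_coe_finset, List.toFinset_card_of_nodup hnd']
      rfl
  have hX : Nat.card {α : ZMod p // α ≠ 0 ∧ α ≠ -1} = p - 2 := by
    have e : {α : ZMod p | α ≠ 0 ∧ α ≠ -1} = ({0, -1} : Set (ZMod p))ᶜ := by
      ext x; simp
    change Nat.card ({α : ZMod p | α ≠ 0 ∧ α ≠ -1} : Set (ZMod p)) = _
    rw [Nat.card_coe_set_eq, e, Set.ncard_compl, Set.ncard_pair (by simp), Nat.card_zmod]
  -- Count the points outside `B` along the fibres of `α ↦ orbit of α`.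
  have hcount : Bᶜ.ncard = p - 7 := by
    rw [Set.ncard_compl, hX, hBcard]
    omega
  set S := {s : Set {α : ZMod p // α ≠ 0 ∧ α ≠ -1} |
      (∃ α, s = MulAction.orbit (Subgroup.closure {u, v}) α) ∧ s.ncard = 6} with hS
  have hfib : Bᶜ.toFinset.card = S.toFinset.card * 6 := by
    rw [Finset.card_eq_sum_card_fiberwise
      (f := fun α => MulAction.orbit (Subgroup.closure {u, v}) α) (t := S.toFinset)]
    · apply Finset.sum_const_nat
      intro s hs
      obtain ⟨⟨β, rfl⟩, hs6⟩ := Set.mem_toFinset.1 hs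
      -- The fibre over an orbit is the orbit itself.
      rw [← hs6, ← Set.ncard_coe_finset]
      congr 1
      ext α
      simp only [Finset.coe_filter, Set.mem_toFinset, Set.mem_compl_iff, Set.mem_ofPred_eq,
        MulAction.orbit_eq_iff]
      refine ⟨fun h => h.2, fun h => ⟨(h6 α).1 ?_, h⟩⟩
      rw [MulAction.orbit_eq_iff.2 h, hs6]
    · intro α hα
      have hα' : α ∉ B := by simpa using hα
      exact Set.mem_toFinset.2 ⟨⟨α, rfl⟩, (h6 α).2 hα'⟩
  rw [← Set.ncard_eq_toFinset_card', ← Set.ncard_eq_toFinset_card', hcount] at hfib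
  omega
end

section
/- Let p ≥ 5 be prime and ω = exp(2πi/p) ∈ ℂ. Let j, k be integers and suppose there exist (x,y,z) ∈ ℂ³ with (x,y,z) ≠ (0,0,0), x^p + y^p + z^p = 0, and λ ∈ ℂ such that ω^j·x = λ·x, ω^k·y = λ·y and z = λ·z (i.e., the automorphism [x:y:z] ↦ [ω^j x : ω^k y : z] of the Fermat curve fixes the point [x:y:z]). Then p ∣ j, or p ∣ k, or j ≡ k (mod p). -/
/-! A nonzero point of the Fermat curve has at most one vanishing coordinate, so two of its
coordinates are nonzero. Cancelling them in the eigenvector equations equates two of the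
eigenvalues `ω ^ j`, `ω ^ k`, `1`, and since `ω` is a primitive `p`-th root of unity this is one
of the three congruences. -/

/-- For a prime `p ≥ 5` and `ω = exp(2πi/p)`, if the automorphism
`[x:y:z] ↦ [ω^j x : ω^k y : z]` of the Fermat curve `x^p + y^p + z^p = 0` fixes a point
(i.e. acts on some nonzero solution `(x,y,z)` by a common scalar `λ`), then
`p ∣ j`, `p ∣ k`, or `j ≡ k (mod p)`. -/
theorem fermat_fixed_points (p : ℕ) [Fact p.Prime] (hp : 5 ≤ p) (j k : ℤ)
    (x y z lam : ℂ)
    (hnz : (x, y, z) ≠ (0, 0, 0))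
    (hF : x ^ p + y ^ p + z ^ p = 0)
    (hx : Complex.exp (2 * Real.pi * Complex.I / p) ^ j * x = lam * x)
    (hy : Complex.exp (2 * Real.pi * Complex.I / p) ^ k * y = lam * y)
    (hz : z = lam * z) :
    (p : ℤ) ∣ j ∨ (p : ℤ) ∣ k ∨ j ≡ k [ZMOD (p : ℤ)] := by
  have hp0 : p ≠ 0 := by omega
  have hprim := Complex.isPrimitiveRoot_exp p hp0
  set ω := Complex.exp (2 * Real.pi * Complex.I / p)
  have hω : ω ≠ 0 := hprim.ne_zero hp0
  have hlam : z ≠ 0 → lam = 1 := fun h => mul_right_cancel₀ h (by rw [one_mul, ← hz])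
  by_cases hx0 : x = 0
  · have hz0 : z ≠ 0 := by
      rintro rfl
      apply hnz
      simpa [hx0, hp0] using hF
    have hy0 : y ≠ 0 := by
      rintro rfl
      apply hz0
      simpa [hx0, hp0] using hF
    refine Or.inr (Or.inl ((hprim.zpow_eq_one_iff_dvd k).1 ?_))
    rw [mul_right_cancel₀ hy0 hy, hlam hz0]
  · by_cases hz0 : z = 0
    · have hy0 : y ≠ 0 := by
        rintro rfl
        apply hx0
        simpa [hz0, hp0] using hF
      refine Or.inr (Or.inr (Int.modEq_iff_dvd.2 ((hprim.zpow_eq_one_iff_dvd (k - j)).1 ?_)))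
      rw [zpow_sub₀ hω, mul_right_cancel₀ hy0 hy, mul_right_cancel₀ hx0 hx]
      refine div_self ?_
      rw [← mul_right_cancel₀ hx0 hx]
      exact zpow_ne_zero j hω
    · refine Or.inl ((hprim.zpow_eq_one_iff_dvd j).1 ?_)
      rw [mul_right_cancel₀ hx0 hx, hlam hz0]
end

section
/- Let p ≥ 5 be prime and ω = exp(2πi/p) ∈ ℂ. Let (x₁,y₁), (x₂,y₂) ∈ ℂ² satisfy x₁ ≠ 0, x₂ ≠ 0, x₁^p + y₁^p + 1 = 0 and x₂^p + y₂^p + 1 = 0. Then (y₁/x₁)^p = (y₂/x₂)^p if and only if there exist integers j, k such that x₂ = ω^j·x₁ and y₂ = ω^k·y₁. -/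
/-!
On the curve, `y ^ p = -1 - x ^ p`, so `(y / x) ^ p = -1 / x ^ p - 1` determines `x ^ p`, hence
also `y ^ p`. Two complex numbers with the same `p`-th power differ by a `p`-th root of unity
(`exists_zpow_mul_of_pow_eq`), that is, by a power of `ω`. The converse is `ω ^ p = 1`.
-/

/-- Elements of a field with equal `n`-th powers differ by a power of any given primitive `n`-th
root of unity. -/
lemma exists_zpow_mul_of_pow_eq {K : Type*} [Field K] {n : ℕ} (hn : n ≠ 0) {ζ : K}
    (hζ : IsPrimitiveRoot ζ n) {a b : K} (h : a ^ n = b ^ n) : ∃ j : ℤ, b = ζ ^ j * a := by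
  by_cases ha : a = 0
  · have hb : b = 0 := by
      rw [ha, zero_pow hn] at h
      exact eq_zero_of_pow_eq_zero h.symm
    exact ⟨0, by simp [ha, hb]⟩
  · have : NeZero n := ⟨hn⟩
    have hr : (b / a) ^ n = 1 := by
      rw [div_pow, ← h, div_self (pow_ne_zero n ha)]
    obtain ⟨i, -, hi⟩ := hζ.eq_pow_of_pow_eq_one hr
    exact ⟨i, by rw [zpow_natCast, hi, div_mul_cancel₀ b ha]⟩

/-- For a prime `p ≥ 5` and `ω = exp(2πi/p)`, two affine points `(x₁,y₁)`, `(x₂,y₂)` of the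
Fermat curve `x^p + y^p + 1 = 0` with `x₁, x₂ ≠ 0` satisfy `(y₁/x₁)^p = (y₂/x₂)^p` if and
only if `x₂ = ω^j x₁` and `y₂ = ω^k y₁` for some integers `j, k`. -/
theorem fermat_fibers_of_pi (p : ℕ) [Fact p.Prime] (hp : 5 ≤ p)
    (x₁ y₁ x₂ y₂ : ℂ) (hx₁ : x₁ ≠ 0) (hx₂ : x₂ ≠ 0)
    (h₁ : x₁ ^ p + y₁ ^ p + 1 = 0) (h₂ : x₂ ^ p + y₂ ^ p + 1 = 0) :
    (y₁ / x₁) ^ p = (y₂ / x₂) ^ p ↔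
      ∃ j k : ℤ, x₂ = Complex.exp (2 * Real.pi * Complex.I / p) ^ j * x₁ ∧
        y₂ = Complex.exp (2 * Real.pi * Complex.I / p) ^ k * y₁ := by
  have hp0 : p ≠ 0 := by omega
  have hω := Complex.isPrimitiveRoot_exp p hp0
  constructor
  · intro h
    rw [div_pow, div_pow, div_eq_div_iff (pow_ne_zero p hx₁) (pow_ne_zero p hx₂)] at h
    have hx : x₁ ^ p = x₂ ^ p := by
      linear_combination h + x₁ ^ p * h₂ - x₂ ^ p * h₁
    have hy : y₁ ^ p = y₂ ^ p := by
      linear_combination h₁ - h₂ - hx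
    obtain ⟨j, hj⟩ := exists_zpow_mul_of_pow_eq hp0 hω hx
    obtain ⟨k, hk⟩ := exists_zpow_mul_of_pow_eq hp0 hω hy
    exact ⟨j, k, hj, hk⟩
  · rintro ⟨j, k, rfl, rfl⟩
    have hpow (m : ℤ) : (Complex.exp (2 * Real.pi * Complex.I / p) ^ m) ^ p = 1 := by
      rw [← zpow_natCast, zpow_comm, zpow_natCast, hω.pow_eq_one, one_zpow]
    rw [div_pow, div_pow, mul_pow, mul_pow, hpow, hpow, one_mul, one_mul]
end

section
/- Let p ≥ 5 be prime with p ≡ 1 (mod 3), let γ be an integer with 1 ≤ γ ≤ p-2 and p ∣ γ²+γ+1, set m = (γ²+γ+1)/p and ε = 1 if γ is even, ε = 2 if γ is odd. Let A = {(x,y) ∈ ℂ² : y^p = x^γ(x-1), x ≠ 0, x ≠ 1}, and define R(x,y) = (1/(1-x), (-1)^ε·x^m/y^(γ+1)). Then R maps A into A (in particular every (x,y) ∈ A has y ≠ 0, so R is well defined), and R∘R∘R = id on A. -/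
/-!
Write `k = γ + 1` and `s = (-1)^ε = (-1)^k`. Since `m p = γ² + γ + 1` is odd, both `m` and `p` are
odd, so every power of `s` with exponent `k`, `m` or `p` is again `s`.

On the curve, `y^p = x^γ (x - 1)` turns the `p`-th power of `s x^m / y^k` into
`s x^(mp - γk) / (x - 1)^k = x / (1 - x)^k`, because `m p = γ k + 1`; this is the equation of the
curve at the abscissa `1 / (1 - x)` (`curve_image`).

The abscissa has period three under `x ↦ 1 / (1 - x)`. For the ordinate, the third iterate contains
`y` to the power `-k³`, and `k³ + 1 = (γ + 2)(γ² + γ + 1) = p m (γ + 2)`, so the curve equation gives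
`y^(k³) y = (x^γ (x - 1))^(m (γ + 2))`. All powers of `x` and `x - 1` then cancel, as
`k² = γ (γ + 2) + 1` (`ordinate_third_iterate`).
-/

/-- The image under `R` of a point of the curve satisfies the equation of the curve. -/
lemma curve_image (p γ m : ℕ) (hm : γ ^ 2 + γ + 1 = m * p) (x y s : ℂ)
    (hx0 : x ≠ 0) (hx1 : x - 1 ≠ 0) (h : y ^ p = x ^ γ * (x - 1)) (hsp : s ^ p = s)
    (hss : s * s = 1) (hneg : (1 - x) ^ (γ + 1) = s * (x - 1) ^ (γ + 1)) :
    (s * x ^ m / y ^ (γ + 1)) ^ p = (1 / (1 - x)) ^ γ * (1 / (1 - x) - 1) := by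
  have hx1' : 1 - x ≠ 0 := fun h0 => hx1 (by linear_combination -h0)
  have hs : s ≠ 0 := left_ne_zero_of_mul_eq_one hss
  have hrhs : (1 / (1 - x)) ^ γ * (1 / (1 - x) - 1) = x / (1 - x) ^ (γ + 1) := by
    rw [div_pow, one_pow]
    field_simp
    ring
  have hyk : (y ^ (γ + 1)) ^ p = (x ^ γ * (x - 1)) ^ (γ + 1) := by rw [← h]; ring
  have hxm : (x ^ m) ^ p = (x ^ γ) ^ (γ + 1) * x := by
    rw [← pow_mul, ← hm]; ring
  rw [hrhs, hneg, div_pow, mul_pow, hsp, hyk, mul_pow, hxm]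
  have hxk : (x ^ γ) ^ (γ + 1) ≠ 0 := pow_ne_zero _ (pow_ne_zero _ hx0)
  have hxk' : (x - 1) ^ (γ + 1) ≠ 0 := pow_ne_zero _ hx1
  rw [div_eq_div_iff (mul_ne_zero hxk hxk') (mul_ne_zero hs hxk')]
  linear_combination ((x ^ γ) ^ (γ + 1) * x * (x - 1) ^ (γ + 1)) * hss

/-- The ordinate of the third iterate of `R` is `y`; the abscissae of the first two iterates
appear here as `1 / (1 - x)` and `(x - 1) / x`. -/
lemma ordinate_third_iterate (p γ m : ℕ) (hm : γ ^ 2 + γ + 1 = m * p) (x y s : ℂ)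
    (hx0 : x ≠ 0) (hx1 : x - 1 ≠ 0) (hy : y ≠ 0) (h : y ^ p = x ^ γ * (x - 1))
    (hsk : s ^ (γ + 1) = s) (hsm : s ^ m = s)
    (hss : s * s = 1) (hneg : (1 - x) ^ (γ + 1) = s * (x - 1) ^ (γ + 1)) :
    s * ((x - 1) / x) ^ m /
      (s * (1 / (1 - x)) ^ m / (s * x ^ m / y ^ (γ + 1)) ^ (γ + 1)) ^ (γ + 1) = y := by
  have hx1' : 1 - x ≠ 0 := fun h0 => hx1 (by linear_combination -h0)
  have hs : s ≠ 0 := left_ne_zero_of_mul_eq_one hss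
  have hkey : y ^ (γ + 1) ^ 3 * y = (x ^ γ * (x - 1)) ^ (m * (γ + 2)) := by
    rw [← h, ← pow_succ, ← pow_mul]
    congr 1
    linear_combination (γ + 2) * hm
  have hmk : ((1 - x) ^ m) ^ (γ + 1) = s * (x - 1) ^ (m * (γ + 1)) := by
    rw [← pow_mul, mul_comm m, pow_mul, hneg, mul_pow, hsm, ← pow_mul]
  have hy3 : y ^ (γ + 1) ^ 3 ≠ 0 := pow_ne_zero _ hy
  have e1 : ((s * x ^ m / y ^ (γ + 1)) ^ (γ + 1)) ^ (γ + 1)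
      = s * x ^ (m * (γ + 1) ^ 2) / y ^ (γ + 1) ^ 3 := by
    simp only [div_pow, mul_pow, hsk, ← pow_mul]
    ring_nf
  have e2 : (s * (1 / (1 - x)) ^ m) ^ (γ + 1) = 1 / (x - 1) ^ (m * (γ + 1)) := by
    rw [mul_pow, hsk, one_div, inv_pow, inv_pow, hmk]
    field_simp
  rw [div_pow _ _ (γ + 1), e1, e2, div_pow]
  have hA : (x - 1) ^ (m * (γ + 1)) ≠ 0 := pow_ne_zero _ hx1
  have hB : x ^ m ≠ 0 := pow_ne_zero _ hx0
  have hC : x ^ (m * (γ + 1) ^ 2) ≠ 0 := pow_ne_zero _ hx0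
  have e3 : (x - 1) ^ m * (x - 1) ^ (m * (γ + 1)) * x ^ (m * (γ + 1) ^ 2)
      = x ^ m * (x ^ γ * (x - 1)) ^ (m * (γ + 2)) := by
    rw [mul_pow, ← pow_mul]
    ring
  calc s * ((x - 1) ^ m / x ^ m) /
        (1 / (x - 1) ^ (m * (γ + 1)) / (s * x ^ (m * (γ + 1) ^ 2) / y ^ (γ + 1) ^ 3))
      = (s * s) * ((x - 1) ^ m * (x - 1) ^ (m * (γ + 1)) * x ^ (m * (γ + 1) ^ 2))
          / (x ^ m * y ^ (γ + 1) ^ 3) := by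
        generalize (x - 1) ^ (m * (γ + 1)) = a at *
        generalize x ^ (m * (γ + 1) ^ 2) = b at *
        generalize y ^ (γ + 1) ^ 3 = c at *
        generalize x ^ m = d at *
        field_simp
    _ = y := by
        rw [hss, e3, ← hkey, div_eq_iff (mul_ne_zero hB hy3)]
        ring

/-- For a prime `p ≥ 5` with `p ≡ 1 (mod 3)`, `1 ≤ γ ≤ p-2` with `p ∣ γ²+γ+1`,
`m = (γ²+γ+1)/p` and `ε = 1` if `γ` is even, `ε = 2` otherwise, the map
`R(x,y) = (1/(1-x), (-1)^ε x^m / y^(γ+1))` maps the affine curve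
`A = {y^p = x^γ(x-1), x ≠ 0, x ≠ 1}` into itself (in particular `y ≠ 0` on `A`),
and `R∘R∘R = id` on `A`. -/
theorem p_gonal_R_order_three (p γ m ε : ℕ) [Fact p.Prime] (hp : 5 ≤ p) (hp3 : p % 3 = 1)
    (hγ1 : 1 ≤ γ) (hγ2 : γ ≤ p - 2) (hm : γ ^ 2 + γ + 1 = m * p)
    (hε : ε = if Even γ then 1 else 2)
    (A : Set (ℂ × ℂ))
    (hA : A = {q : ℂ × ℂ | q.2 ^ p = q.1 ^ γ * (q.1 - 1) ∧ q.1 ≠ 0 ∧ q.1 ≠ 1})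
    (R : ℂ × ℂ → ℂ × ℂ)
    (hR : ∀ x y : ℂ, R (x, y) = (1 / (1 - x), (-1 : ℂ) ^ ε * x ^ m / y ^ (γ + 1))) :
    (∀ q ∈ A, q.2 ≠ 0 ∧ R q ∈ A) ∧ ∀ q ∈ A, R (R (R q)) = q := by
  have hodd : Odd (m * p) := by
    rw [← hm, show γ ^ 2 + γ + 1 = γ * (γ + 1) + 1 by ring]
    exact (Nat.even_mul_succ_self γ).add_one
  obtain ⟨hmo, hpo⟩ := Nat.odd_mul.mp hodd
  have hsign : (-1 : ℂ) ^ ε = (-1) ^ (γ + 1) := by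
    by_cases hγ : Even γ
    · rw [hε, if_pos hγ, hγ.add_one.neg_one_pow, pow_one]
    · rw [hε, if_neg hγ, (Nat.not_even_iff_odd.mp hγ).add_one.neg_one_pow]
      norm_num
  obtain ⟨s, hs⟩ : ∃ s : ℂ, s = (-1) ^ (γ + 1) := ⟨_, rfl⟩
  rw [hsign, ← hs] at hR
  have hsodd : ∀ n, Odd n → s ^ n = s := fun n hn => by
    rw [hs, ← pow_mul, mul_comm, pow_mul, hn.neg_one_pow]
  have hss : s * s = 1 := by rw [hs, ← mul_pow]; norm_num
  have hsk : s ^ (γ + 1) = s := by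
    rcases Nat.even_or_odd (γ + 1) with hk | hk
    · rw [hs, hk.neg_one_pow, one_pow]
    · exact hsodd _ hk
  have hneg : ∀ x : ℂ, (1 - x) ^ (γ + 1) = s * (x - 1) ^ (γ + 1) := fun x => by
    rw [hs, ← mul_pow]
    ring
  have hp0 : p ≠ 0 := by omega
  subst hA
  have hy : ∀ x y : ℂ, y ^ p = x ^ γ * (x - 1) → x ≠ 0 → x ≠ 1 → y ≠ 0 := by
    rintro x y h hx0 hx1 rfl
    rw [zero_pow hp0] at h
    exact mul_ne_zero (pow_ne_zero _ hx0) (sub_ne_zero.mpr hx1) h.symm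
  constructor
  · rintro ⟨x, y⟩ ⟨h, hx0, hx1⟩
    dsimp only at h hx0 hx1
    have hx1' : 1 - x ≠ 0 := sub_ne_zero.mpr hx1.symm
    refine ⟨hy x y h hx0 hx1, ?_⟩
    rw [hR]
    refine ⟨curve_image p γ m hm x y s hx0 (sub_ne_zero.mpr hx1) h (hsodd p hpo) hss (hneg x),
      one_div_ne_zero hx1', ?_⟩
    intro h1
    rw [div_eq_one_iff_eq hx1'] at h1
    exact hx0 (by linear_combination h1)
  · rintro ⟨x, y⟩ ⟨h, hx0, hx1⟩
    dsimp only at h hx0 hx1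
    have hx1' : 1 - x ≠ 0 := sub_ne_zero.mpr hx1.symm
    have hx2 : 1 / (1 - 1 / (1 - x)) = (x - 1) / x := by
      rw [show 1 - 1 / (1 - x) = x / (x - 1) by
        have := sub_ne_zero.mpr hx1
        rw [show 1 - x = -(x - 1) by ring]
        field_simp
        ring, one_div_div]
    have hx3 : 1 / (1 - (x - 1) / x) = x := by
      rw [show 1 - (x - 1) / x = 1 / x by field_simp; ring, one_div_one_div]
    rw [hR, hR, hR, hx2, hx3, ordinate_third_iterate p γ m hm x y s hx0 (sub_ne_zero.mpr hx1)
      (hy x y h hx0 hx1) h hsk (hsodd m hmo) hss (hneg x)]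
end

section
/- Let p ≥ 5 be prime with p ≡ 1 (mod 3), let γ be an integer with 1 ≤ γ ≤ p-2 and p ∣ γ²+γ+1, set m = (γ²+γ+1)/p, ε = 1 if γ is even and ε = 2 if γ is odd, and ω = exp(2πi/p). On A = {(x,y) ∈ ℂ² : y^p = x^γ(x-1), x ≠ 0, x ≠ 1}, define T(x,y) = (x, ω·y) and R(x,y) = (1/(1-x), (-1)^ε·x^m/y^(γ+1)). Then T maps A bijectively to A, and R∘T = T^(γ²)∘R on A; that is, for every (x,y) ∈ A, R(x, ωy) = (1/(1-x), ω^(γ²)·(-1)^ε·x^m/y^(γ+1)). -/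
/-!
Since `ω ^ p = 1` and `p ∣ γ² + γ + 1`, it follows that `ω ^ (γ²) * ω ^ (γ + 1) = 1`, so replacing `y` by
`ω y` in `x ^ m / y ^ (γ + 1)` multiplies it by `ω ^ (-(γ + 1)) = ω ^ (γ²)`. The map `T` preserves
`A` because `(ω y) ^ p = y ^ p`, and its inverse on `A` is `(x, y) ↦ (x, ω⁻¹ y)`.
-/

/-- For a prime `p ≥ 5` with `p ≡ 1 (mod 3)`, `1 ≤ γ ≤ p-2` with `p ∣ γ²+γ+1`,
`m = (γ²+γ+1)/p`, `ε = 1` if `γ` is even and `ε = 2` otherwise, and `ω = exp(2πi/p)`: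
on the affine curve `A = {y^p = x^γ(x-1), x ≠ 0, x ≠ 1}` the map `T(x,y) = (x, ωy)` is a
bijection of `A` onto itself and `R∘T = T^(γ²)∘R` on `A`, where
`R(x,y) = (1/(1-x), (-1)^ε x^m / y^(γ+1))`; that is, for every `(x,y) ∈ A`,
`R(x, ωy) = (1/(1-x), ω^(γ²)·(-1)^ε·x^m/y^(γ+1))`. -/
theorem p_gonal_RT_relation (p γ m ε : ℕ) [Fact p.Prime] (hp : 5 ≤ p) (hp3 : p % 3 = 1)
    (hγ1 : 1 ≤ γ) (hγ2 : γ ≤ p - 2) (hm : γ ^ 2 + γ + 1 = m * p)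
    (hε : ε = if Even γ then 1 else 2)
    (A : Set (ℂ × ℂ))
    (hA : A = {q : ℂ × ℂ | q.2 ^ p = q.1 ^ γ * (q.1 - 1) ∧ q.1 ≠ 0 ∧ q.1 ≠ 1})
    (R T : ℂ × ℂ → ℂ × ℂ)
    (hR : ∀ x y : ℂ, R (x, y) = (1 / (1 - x), (-1 : ℂ) ^ ε * x ^ m / y ^ (γ + 1)))
    (hT : ∀ x y : ℂ, T (x, y) = (x, Complex.exp (2 * Real.pi * Complex.I / p) * y)) :
    Set.BijOn T A A ∧
    (∀ q ∈ A, R (T q) = T^[γ ^ 2] (R q)) ∧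
    ∀ q ∈ A, R (q.1, Complex.exp (2 * Real.pi * Complex.I / p) * q.2) =
      (1 / (1 - q.1),
        Complex.exp (2 * Real.pi * Complex.I / p) ^ (γ ^ 2) *
          ((-1 : ℂ) ^ ε * q.1 ^ m / q.2 ^ (γ + 1))) := by
  have hω : Complex.exp (2 * Real.pi * Complex.I / p) ^ p = 1 :=
    (Complex.isPrimitiveRoot_exp p (by omega)).pow_eq_one
  have hω0 : Complex.exp (2 * Real.pi * Complex.I / p) ≠ 0 := Complex.exp_ne_zero _
  generalize Complex.exp (2 * Real.pi * Complex.I / p) = ω at *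
  have hinv : ω ^ (γ ^ 2) * ω ^ (γ + 1) = 1 := by
    rw [← pow_add, ← add_assoc, hm, mul_comm, pow_mul, hω, one_pow]
  have hiter : ∀ (k : ℕ) (x y : ℂ), T^[k] (x, y) = (x, ω ^ k * y) := by
    intro k x y
    induction k with
    | zero => simp
    | succ k ih => rw [Function.iterate_succ_apply', ih, hT, pow_succ', mul_assoc]
  have hmain : ∀ x y : ℂ, R (x, ω * y) =
      (1 / (1 - x), ω ^ (γ ^ 2) * ((-1 : ℂ) ^ ε * x ^ m / y ^ (γ + 1))) := by
    intro x y
    rw [hR, eq_inv_of_mul_eq_one_left hinv, mul_pow, div_eq_mul_inv, div_eq_mul_inv, mul_inv]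
    congr 1
    ring
  subst hA
  refine ⟨⟨?_, ?_, ?_⟩, ?_, fun q _ => hmain q.1 q.2⟩
  · rintro ⟨x, y⟩ ⟨h, hx⟩
    rw [hT]
    exact ⟨by simpa [mul_pow, hω] using h, hx⟩
  · rintro ⟨x, y⟩ _ ⟨x', y'⟩ _ h
    simpa [hT, hω0] using h
  · rintro ⟨x, y⟩ ⟨h, hx⟩
    refine ⟨(x, ω⁻¹ * y), ⟨by simpa [mul_pow, hω] using h, hx⟩, ?_⟩
    rw [hT, mul_inv_cancel_left₀ hω0]
  · rintro ⟨x, y⟩ _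
    rw [hT, hmain, hR, hiter]
end

section
/- Let p ≥ 5 be prime with p ≡ 1 (mod 3), let γ be an integer with 1 ≤ γ ≤ p-2 and p ∣ γ²+γ+1, set m = (γ²+γ+1)/p, ε = 1 if γ is even and ε = 2 if γ is odd, and ω = exp(2πi/p). On A = {(x,y) ∈ ℂ² : y^p = x^γ(x-1), x ≠ 0, x ≠ 1}, define T(x,y) = (x, ω·y) and R(x,y) = (1/(1-x), (-1)^ε·x^m/y^(γ+1)). Then for every integer a, the composite map S = T^a ∘ R satisfies S∘S∘S = id on A; in particular the elements T^(γ²-1)∘R and T^(2(γ²-1))∘R each generate a group of order 3 of automorphisms of A. -/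
/-!
Put `g = γ + 1` and `c = ω ^ a * (-1) ^ ε`. The first coordinate runs through the 3-cycle
`x, 1 / (1 - x), (x - 1) / x`. The second coordinate of `S (S (S (x, y)))` is
`c ^ (1 - g + g ^ 2)` times a monomial in `x`, `x - 1` and `y ^ (-g ^ 3)`. Since
`1 - g + g ^ 2 = γ ^ 2 + γ + 1 = m * p`, also `g ^ 3 + 1 = (γ + 2) * m * p`, so the curve equation
turns `y ^ (-g ^ 3)` into `y` times a monomial in `x` and `x - 1`. All powers of `x` and `x - 1`
cancel, up to the sign `(-1) ^ (m * g)`, which is `(-1) ^ g` because `m` is odd. That sign is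
cancelled by `c ^ (m * p) = (-1) ^ g` (`scalar_pow`); `second_coord_cube` is the cancellation.
-/

lemma odd_mul_of_eq {p γ m : ℕ} (hm : γ ^ 2 + γ + 1 = m * p) : Odd (m * p) := by
  have h : γ ^ 2 + γ = γ * (γ + 1) := by ring
  rw [← hm, h]
  exact (Nat.even_mul_succ_self γ).add_one

/-- The root of unity drops out of the `m * p`-th power, and since `m * p` is odd only the sign
`(-1) ^ ε = (-1) ^ (γ + 1)` remains. -/
lemma scalar_pow (p γ m ε : ℕ) (hp : p ≠ 0) (hm : γ ^ 2 + γ + 1 = m * p)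
    (hε : ε = if Even γ then 1 else 2) (a : ℤ) :
    (Complex.exp (2 * Real.pi * Complex.I / p) ^ a * (-1 : ℂ) ^ ε) ^ (m * p)
      = (-1) ^ (γ + 1) := by
  have hodd := odd_mul_of_eq hm
  have hω : (Complex.exp (2 * Real.pi * Complex.I / p) ^ a) ^ (m * p) = 1 := by
    rw [← zpow_natCast, zpow_comm, zpow_natCast, mul_comm m p, pow_mul,
      (Complex.isPrimitiveRoot_exp p hp).pow_eq_one, one_pow, one_zpow]
  rw [mul_pow, hω, one_mul, hε]
  split_ifs with h
  · rw [pow_one, hodd.neg_one_pow, h.add_one.neg_one_pow]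
  · rw [neg_one_sq, one_pow, (Nat.not_even_iff_odd.mp h).add_one.neg_one_pow]

/-- The second coordinate of `S (S (S (x, y)))`, in which `-1 / (x - 1)` and `(x - 1) / x` are the
first coordinates of `S (x, y)` and `S (S (x, y))`, is `y`. -/
lemma second_coord_cube (p γ m : ℕ) (hm : γ ^ 2 + γ + 1 = m * p) (c x y : ℂ) (hc : c ≠ 0)
    (hx : x ≠ 0) (hx1 : x - 1 ≠ 0) (hy : y ≠ 0) (hcurve : y ^ p = x ^ γ * (x - 1))
    (hcp : c ^ (m * p) = (-1) ^ (γ + 1)) :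
    c * ((x - 1) / x) ^ m /
      (c * (-1 / (x - 1)) ^ m / (c * x ^ m / y ^ (γ + 1)) ^ (γ + 1)) ^ (γ + 1) = y := by
  have hmodd : Odd m := (Nat.odd_mul.mp (odd_mul_of_eq hm)).1
  generalize x - 1 = u at *
  have hycube : y ^ ((γ + 1) * (γ + 1) * (γ + 1)) * y = (x ^ γ * u) ^ (m * (γ + 2)) := by
    rw [← hcurve, ← pow_mul, ← pow_succ]
    congr 1
    linear_combination (γ + 2) * hm
  have hccube : c * c ^ ((γ + 1) * (γ + 1)) = c ^ (γ + 1) * (-1) ^ (γ + 1) := by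
    rw [← hcp, ← pow_add, ← pow_succ']
    congr 1
    linear_combination hm
  have hsign : ((-1 : ℂ) ^ m) = -1 := hmodd.neg_one_pow
  simp only [div_pow, mul_pow, hsign]
  have hneg : ((-1 : ℂ) ^ (γ + 1)) ≠ 0 := pow_ne_zero _ (by norm_num)
  have key : c * u ^ m * c ^ ((γ + 1) * (γ + 1)) * x ^ (m * (γ + 1) * (γ + 1)) * u ^ (m * (γ + 1))
      = y ^ ((γ + 1) * (γ + 1) * (γ + 1)) * y * x ^ m * (c ^ (γ + 1) * (-1) ^ (γ + 1)) := by
    rw [hycube, ← hccube]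
    ring
  simp only [← pow_mul]
  rw [div_eq_iff (by positivity)]
  field_simp
  linear_combination key

/-- For a prime `p ≥ 5` with `p ≡ 1 (mod 3)`, `1 ≤ γ ≤ p-2` with `p ∣ γ²+γ+1`,
`m = (γ²+γ+1)/p`, `ε = 1` if `γ` is even and `ε = 2` otherwise, and `ω = exp(2πi/p)`:
for every integer `a`, the map `S = T^a ∘ R` (where `T^a(x,y) = (x, ω^a y)` and
`R(x,y) = (1/(1-x), (-1)^ε x^m / y^(γ+1))`) satisfies `S∘S∘S = id` on the affine curve
`A = {y^p = x^γ(x-1), x ≠ 0, x ≠ 1}`. -/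
theorem p_gonal_TaR_order_three (p γ m ε : ℕ) [Fact p.Prime] (hp : 5 ≤ p) (hp3 : p % 3 = 1)
    (hγ1 : 1 ≤ γ) (hγ2 : γ ≤ p - 2) (hm : γ ^ 2 + γ + 1 = m * p)
    (hε : ε = if Even γ then 1 else 2)
    (A : Set (ℂ × ℂ))
    (hA : A = {q : ℂ × ℂ | q.2 ^ p = q.1 ^ γ * (q.1 - 1) ∧ q.1 ≠ 0 ∧ q.1 ≠ 1})
    (R : ℂ × ℂ → ℂ × ℂ)
    (hR : ∀ x y : ℂ, R (x, y) = (1 / (1 - x), (-1 : ℂ) ^ ε * x ^ m / y ^ (γ + 1)))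
    (a : ℤ) (S : ℂ × ℂ → ℂ × ℂ)
    (hS : ∀ q : ℂ × ℂ, S q = ((R q).1, Complex.exp (2 * Real.pi * Complex.I / p) ^ a * (R q).2)) :
    ∀ q ∈ A, S (S (S q)) = q := by
  rintro ⟨x, y⟩ hq
  rw [hA] at hq
  obtain ⟨hcurve, hx, hx1⟩ := hq
  dsimp only at hcurve hx hx1
  have hp0 : p ≠ 0 := by omega
  have hu : x - 1 ≠ 0 := sub_ne_zero.mpr hx1
  have hu' : 1 - x ≠ 0 := sub_ne_zero.mpr (Ne.symm hx1)
  have hy : y ≠ 0 := by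
    rintro rfl
    rw [zero_pow hp0] at hcurve
    exact mul_ne_zero (pow_ne_zero _ hx) hu hcurve.symm
  have hc := scalar_pow p γ m ε hp0 hm hε a
  set c := Complex.exp (2 * Real.pi * Complex.I / p) ^ a * (-1 : ℂ) ^ ε with hcdef
  have hc0 : c ≠ 0 :=
    mul_ne_zero (zpow_ne_zero _ (Complex.exp_ne_zero _)) (pow_ne_zero _ (by norm_num))
  have hSxy : ∀ x y : ℂ, S (x, y) = (1 / (1 - x), c * x ^ m / y ^ (γ + 1)) := by
    intro x y
    rw [hS, hR, hcdef]
    ext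
    · rfl
    · simp only; ring
  have e1 : 1 / (1 - x) = -1 / (x - 1) := by
    rw [div_eq_div_iff hu' hu]; ring
  have e2 : 1 / (1 - -1 / (x - 1)) = (x - 1) / x := by
    have h : 1 - -1 / (x - 1) = x / (x - 1) := by field_simp; ring
    rw [h, one_div_div]
  have e3 : 1 / (1 - (x - 1) / x) = x := by
    have h : 1 - (x - 1) / x = 1 / x := by field_simp; ring
    rw [h, one_div_one_div]
  rw [hSxy, hSxy, hSxy, e1, e2, e3,
    second_coord_cube p γ m hm c x y hc0 hx hu hy hcurve hc]
end

section
/- Let p ≥ 5 be prime with p ≡ 1 (mod 3), let γ be an integer with 1 ≤ γ ≤ p-2 and p ∣ γ²+γ+1, set m = (γ²+γ+1)/p, ε = 1 if γ is even and ε = 2 if γ is odd. Let A = {(x,y) ∈ ℂ² : y^p = x^γ(x-1), x ≠ 0, x ≠ 1} and R(x,y) = (1/(1-x), (-1)^ε·x^m/y^(γ+1)). Then the set of fixed points {(x,y) ∈ A : R(x,y) = (x,y)} has exactly two elements. -/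
/-!
A fixed point has `x = 1/(1-x)`, that is `x² - x + 1 = 0`, which has two distinct roots. For such an
`x` one has `x - 1 = x²`, so the remaining conditions on `y` become `y^p = x^(γ+2)` and
`y^(γ+2) = (-1)^ε x^m`. The exponents `p` and `γ+2` are coprime: if `p ∣ γ+2`, then `γ ≡ -2` and
`γ²+γ+1 ≡ 3 (mod p)`, so `p ∣ 3`. Hence (`existsUnique_of_coprime_pow`) there is exactly one `y` as soon
as the compatibility `(x^(γ+2))^(γ+2) = ((-1)^ε x^m)^p` holds; this follows from `x³ = -1`, because
`(γ+2)² = mp + 3(γ+1)` and `ε ≡ γ+1 (mod 2)`.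
-/

/-- Two compatible power equations with coprime exponents have exactly one common solution, namely
`a ^ u * b ^ v` where `u` and `v` are Bézout coefficients of the exponents. -/
lemma existsUnique_of_coprime_pow {K : Type*} [Field K] {n k : ℕ} (h : Nat.Coprime n k)
    {a b : K} (ha : a ≠ 0) (hb : b ≠ 0) (hab : a ^ k = b ^ n) :
    ∃ y : K, ∀ z : K, z ≠ 0 ∧ z ^ n = a ∧ z ^ k = b ↔ z = y := by
  have hbez : (n : ℤ) * n.gcdA k + k * n.gcdB k = 1 := by
    rw [← Nat.gcd_eq_gcd_ab, h]; rfl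
  generalize n.gcdA k = u at hbez
  generalize n.gcdB k = v at hbez
  have hab' : a ^ (k : ℤ) = b ^ (n : ℤ) := by simpa using hab
  refine ⟨a ^ u * b ^ v, fun z => ⟨?_, ?_⟩⟩
  · rintro ⟨hz, rfl, rfl⟩
    rw [← zpow_natCast, ← zpow_natCast, ← zpow_mul, ← zpow_mul, ← zpow_add₀ hz, hbez, zpow_one]
  · rintro rfl
    refine ⟨mul_ne_zero (zpow_ne_zero _ ha) (zpow_ne_zero _ hb), ?_, ?_⟩
    · rw [← zpow_natCast, mul_zpow, ← zpow_mul, ← zpow_mul, mul_comm v, zpow_mul b, ← hab',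
        ← zpow_mul, ← zpow_add₀ ha, mul_comm u, hbez, zpow_one]
    · rw [← zpow_natCast, mul_zpow, ← zpow_mul, ← zpow_mul, mul_comm u, zpow_mul a, hab',
        ← zpow_mul, ← zpow_add₀ hb, mul_comm v, hbez, zpow_one]

/-- For a prime `p ≥ 5` with `p ≡ 1 (mod 3)`, `1 ≤ γ ≤ p-2` with `p ∣ γ²+γ+1`,
`m = (γ²+γ+1)/p`, `ε = 1` if `γ` is even and `ε = 2` otherwise, the order-three automorphism
`R(x,y) = (1/(1-x), (-1)^ε x^m / y^(γ+1))` of the affine curve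
`A = {y^p = x^γ(x-1), x ≠ 0, x ≠ 1}` has exactly two fixed points on `A`. -/
theorem p_gonal_R_two_fixed_points (p γ m ε : ℕ) [Fact p.Prime] (hp : 5 ≤ p) (hp3 : p % 3 = 1)
    (hγ1 : 1 ≤ γ) (hγ2 : γ ≤ p - 2) (hm : γ ^ 2 + γ + 1 = m * p)
    (hε : ε = if Even γ then 1 else 2)
    (A : Set (ℂ × ℂ))
    (hA : A = {q : ℂ × ℂ | q.2 ^ p = q.1 ^ γ * (q.1 - 1) ∧ q.1 ≠ 0 ∧ q.1 ≠ 1})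
    (R : ℂ × ℂ → ℂ × ℂ)
    (hR : ∀ x y : ℂ, R (x, y) = (1 / (1 - x), (-1 : ℂ) ^ ε * x ^ m / y ^ (γ + 1))) :
    {q ∈ A | R q = q}.ncard = 2 := by
  have hpp : p.Prime := Fact.out
  have hcop : Nat.Coprime p (γ + 2) := by
    rw [hpp.coprime_iff_not_dvd]
    intro hd
    -- `(γ² + γ + 1) + 3(γ + 2) = (γ + 2)² + 3`, so `p ∣ γ + 2` gives `p ∣ 3`.
    have h3 : p ∣ (γ + 2) * (γ + 2) + 3 := by
      have : (γ + 2) * (γ + 2) + 3 = m * p + 3 * (γ + 2) := by rw [← hm]; ring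
      rw [this]
      exact dvd_add (dvd_mul_left _ _) (dvd_mul_of_dvd_right hd _)
    have := Nat.le_of_dvd (by norm_num) ((Nat.dvd_add_right (dvd_mul_of_dvd_left hd _)).1 h3)
    omega
  have hsign : (-1 : ℂ) ^ ε = (-1) ^ (γ + 1) := by
    rcases Nat.even_or_odd γ with h | h
    · rw [hε, if_pos h, h.add_one.neg_one_pow, pow_one]
    · rw [hε, if_neg (Nat.not_even_iff_odd.2 h), h.add_one.neg_one_pow]; norm_num
  have hodd : Odd p := hpp.odd_of_ne_two (by omega)
  have hfiber : ∀ x : ℂ, x ^ 2 - x + 1 = 0 →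
      ∃ y : ℂ, ∀ z, ((x, z) ∈ A ∧ R (x, z) = (x, z)) ↔ z = y := by
    intro x hx
    have hx0 : x ≠ 0 := by rintro rfl; norm_num at hx
    have hx1 : x ≠ 1 := by rintro rfl; norm_num at hx
    have hx3 : x ^ 3 = -1 := by linear_combination (x + 1) * hx
    have hsub : x - 1 = x ^ 2 := by linear_combination -hx
    have hinv : 1 / (1 - x) = x := by
      rw [div_eq_iff (sub_ne_zero.2 hx1.symm)]; linear_combination hx
    have hcompat : (x ^ (γ + 2)) ^ (γ + 2) = ((-1) ^ ε * x ^ m) ^ p := by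
      rw [hsign, mul_pow, ← pow_mul, ← pow_mul, ← pow_mul, ← hm, mul_comm (γ + 1) p, pow_mul (-1),
        hodd.neg_one_pow, ← hx3, ← pow_mul, ← pow_add]
      congr 1; ring
    obtain ⟨y, hy⟩ := existsUnique_of_coprime_pow hcop (pow_ne_zero (γ + 2) hx0)
      (mul_ne_zero (pow_ne_zero ε (by norm_num : (-1 : ℂ) ≠ 0)) (pow_ne_zero m hx0)) hcompat
    refine ⟨y, fun z => ?_⟩
    rw [← hy z, hA, hR, hinv]
    simp only [Set.mem_ofPred_eq, Prod.mk.injEq, true_and, hsub, ← pow_add]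
    constructor
    · rintro ⟨⟨h1, -, -⟩, h2⟩
      have hz : z ≠ 0 := by
        rintro rfl
        rw [zero_pow hpp.ne_zero] at h1
        exact pow_ne_zero _ hx0 h1.symm
      refine ⟨hz, h1, ?_⟩
      rw [div_eq_iff (pow_ne_zero _ hz)] at h2
      rw [h2]; ring
    · rintro ⟨hz, h1, h2⟩
      refine ⟨⟨h1, hx0, hx1⟩, ?_⟩
      rw [div_eq_iff (pow_ne_zero _ hz), ← h2]; ring
  obtain ⟨s, hs⟩ := IsAlgClosed.exists_pow_nat_eq (-3 : ℂ) (n := 2) (by norm_num)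
  have hs0 : s ≠ 0 := by rintro rfl; norm_num at hs
  obtain ⟨y₁, hy₁⟩ := hfiber ((1 + s) / 2) (by linear_combination hs / 4)
  obtain ⟨y₂, hy₂⟩ := hfiber ((1 - s) / 2) (by linear_combination hs / 4)
  rw [Set.ncard_eq_two]
  refine ⟨((1 + s) / 2, y₁), ((1 - s) / 2, y₂), ?_, ?_⟩
  · intro h
    exact hs0 (by linear_combination congrArg Prod.fst h)
  · ext ⟨x, z⟩
    simp only [Set.mem_ofPred_eq, Set.mem_insert_iff, Set.mem_singleton_iff, Prod.mk.injEq]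
    constructor
    · rintro ⟨hmem, hfix⟩
      have hx1 : x ≠ 1 := by rw [hA] at hmem; exact hmem.2.2
      have hinv : 1 / (1 - x) = x := by rw [hR] at hfix; exact congrArg Prod.fst hfix
      rw [div_eq_iff (sub_ne_zero.2 hx1.symm)] at hinv
      have hprod : (x - (1 + s) / 2) * (x - (1 - s) / 2) = 0 := by
        linear_combination hinv - hs / 4
      rcases mul_eq_zero.1 hprod with h | h
      · obtain rfl := sub_eq_zero.1 h
        exact Or.inl ⟨rfl, (hy₁ z).1 ⟨hmem, hfix⟩⟩
      · obtain rfl := sub_eq_zero.1 h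
        exact Or.inr ⟨rfl, (hy₂ z).1 ⟨hmem, hfix⟩⟩
    · rintro (⟨rfl, h⟩ | ⟨rfl, h⟩)
      · exact (hy₁ z).2 h
      · exact (hy₂ z).2 h
end
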